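/- arXiv:1603.03134 — 3 statements merged into one kernel-verified Lean document; each statement's English description precedes it below -/
import Mathlib

section
/- There is an absolute constant \(C>0\) such that for every integer \(k\geq 1\), every real \(t\) (write \(T=3+|t|\)), every real \(z>0\) and every real \(c\) with \(-k<c<0\), the absolutely convergent integral \(M:=\frac{1}{2\pi}\int_{-\infty}^{\infty}\frac{\Gamma(k+it+c+i\tau)\,\Gamma(k-it+c+i\tau)\,\Gamma(-(c+i\tau))}{\Gamma(2k+c+i\tau)}\,z^{c+i\tau}\,d\tau\) satisfies \(\cosh(\pi t)\,|M|\;\leq\; C\Bigl[\frac{z^{-k}}{\sqrt{T}}\bigl(1+|\log z|+\log k\bigr)+z^{-k-1/2}\,\frac{k+T}{T}\Bigr]\). -/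
open MeasureTheory

/-- The integrand of the Mellin–Barnes integral representing
`Γ(k+it)Γ(k-it)/Γ(2k) · ₂F₁(k+it, k-it, 2k; -z)`, on the vertical line `Re s = c`:
`τ ↦ Γ(k+it+c+iτ) Γ(k-it+c+iτ) Γ(-(c+iτ)) / Γ(2k+c+iτ) · z^(c+iτ)`,
where `z^(c+iτ) = exp((c+iτ) log z)` with the real logarithm. -/
noncomputable def mbIntegrand (k : ℕ) (t c z : ℝ) (τ : ℝ) : ℂ :=
  Complex.Gamma ((k : ℂ) + t * Complex.I + c + τ * Complex.I) *
    Complex.Gamma ((k : ℂ) - t * Complex.I + c + τ * Complex.I) *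
    Complex.Gamma (-((c : ℂ) + τ * Complex.I)) /
    Complex.Gamma (2 * (k : ℂ) + c + τ * Complex.I) *
    Complex.exp (((c : ℂ) + τ * Complex.I) * Real.log z)

/-!
Write `a = s + k` for the Mellin variable. By Cauchy's theorem the integral does not depend on the
line `Re a = α` with `0 < α < k`. On `1 / 4 < α < 1 / 2` the quotient `Γ(k - a) / Γ(k + a)` is, up
to Gamma factors not involving `k`, the moment `∫ (sin φ)^(2a-1) sin ((2k-1) φ) dφ` over
`(0, π/2)`, and `Γ(a + it) Γ(a - it) Γ(1 - a) / Γ(1/2 + a)` is, up to a factor `sinh (π t)`, the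
Mellin transform at `1 - 2a` of `sin (2t arsinh x) / √(1 + x²)`. Mellin inversion and Fubini turn
`sinh (π t)` times the integral into `4π z^(1/2-k)` times
`∫ sin (2t arsinh (√z sin φ)) sin ((2k-1) φ) / √(1 + z sin² φ) dφ` over `(0, π/2)`.

For `|t| ≥ 1` this integral is estimated by integration by parts against the regularisation
`D / (D² + z |t|)` of `1 / D`, where `D / √(1 + z sin² φ)` is the derivative of the phase; the
curvature of the phase controls the error wherever `D` is small. For `|t| ≤ 1` the Mellin–Barnes
integral is bounded absolutely on the line `Re a = 1 / (2 (1 + |log z|))`.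
-/

namespace MellinBarnes

open Complex (I)
open Set Filter Topology
open scoped Real

section Gamma

theorem differentiableAt_Gamma_of_re_pos {s : ℂ} (hs : 0 < s.re) :
    DifferentiableAt ℂ Complex.Gamma s := by
  refine Complex.differentiableAt_Gamma s fun m hm => ?_
  rw [hm, Complex.neg_re, Complex.natCast_re] at hs
  linarith [m.cast_nonneg (α := ℝ)]

theorem continuousAt_Gamma_of_pos {x : ℝ} (hx : 0 < x) : ContinuousAt Real.Gamma x :=
  (Real.differentiableOn_Gamma_Ioi.differentiableAt (Ioi_mem_nhds hx)).continuousAt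

theorem norm_Gamma_le {s : ℂ} (hs : 0 < s.re) : ‖Complex.Gamma s‖ ≤ Real.Gamma s.re := by
  rw [Complex.Gamma_eq_integral hs, Real.Gamma_eq_integral hs, Complex.GammaIntegral]
  refine (norm_integral_le_integral_norm _).trans_eq
    (setIntegral_congr_fun measurableSet_Ioi fun x (hx : 0 < x) => ?_)
  simp only [norm_mul, Complex.norm_cpow_eq_rpow_re_of_pos hx, Complex.sub_re, Complex.one_re,
    Complex.norm_of_nonneg (Real.exp_pos _).le]

theorem norm_Gamma_le_div_norm {s : ℂ} (hs : 0 < s.re) :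
    ‖Complex.Gamma s‖ ≤ Real.Gamma (1 + s.re) / ‖s‖ := by
  have hs0 : s ≠ 0 := by rintro rfl; exact lt_irrefl _ hs
  rw [le_div_iff₀ (norm_pos_iff.mpr hs0), mul_comm, ← norm_mul, ← Complex.Gamma_add_one s hs0]
  simpa [add_comm] using norm_Gamma_le (s := s + 1) (by simp; linarith)

theorem norm_betaIntegral_le {u v : ℂ} (hu : 0 < u.re) (hv : 0 < v.re) :
    ‖Complex.betaIntegral u v‖ ≤ ProbabilityTheory.beta u.re v.re := by
  have hbeta : ProbabilityTheory.beta u.re v.re =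
      ∫ x in (0 : ℝ)..1, x ^ (u.re - 1) * (1 - x) ^ (v.re - 1) := by
    rw [ProbabilityTheory.beta_eq_betaIntegralReal _ _ hu hv, Complex.betaIntegral,
      ← Complex.ofReal_re (∫ x in (0 : ℝ)..1, _), ← intervalIntegral.integral_ofReal]
    congr 1
    refine intervalIntegral.integral_congr_Ioo_of_le zero_le_one fun x hx => ?_
    have h1x : 0 ≤ 1 - x := by linarith [hx.2]
    push_cast [Complex.ofReal_cpow hx.1.le, Complex.ofReal_cpow h1x]
    rfl
  rw [hbeta, Complex.betaIntegral]
  refine (intervalIntegral.norm_integral_le_integral_norm zero_le_one).trans_eq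
    (intervalIntegral.integral_congr_Ioo_of_le zero_le_one fun x hx => ?_)
  have h1x : 0 < 1 - x := by linarith [hx.2]
  simp only [norm_mul, Complex.norm_cpow_eq_rpow_re_of_pos hx.1, ← Complex.ofReal_one,
    ← Complex.ofReal_sub, Complex.norm_cpow_eq_rpow_re_of_pos h1x, Complex.sub_re,
    Complex.ofReal_re]

theorem norm_Gamma_div_Gamma_le {u v : ℂ} (hu : 0 < u.re) (huv : u.re < v.re)
    (him : v.im = -u.im) :
    ‖Complex.Gamma u / Complex.Gamma v‖ ≤ Real.Gamma u.re / Real.Gamma v.re := by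
  obtain ⟨d, hd, hv⟩ : ∃ d : ℝ, 0 < d ∧ v = (starRingEnd ℂ) u + d :=
    ⟨v.re - u.re, by linarith, Complex.ext (by simp) (by simp [him])⟩
  have hre : ((starRingEnd ℂ) u).re = u.re := Complex.conj_re u
  have hΓ := Real.Gamma_pos_of_pos hd
  have hbeta := norm_betaIntegral_le (u := (starRingEnd ℂ) u) (v := d) (by simpa) (by simpa)
  rw [Complex.betaIntegral_eq_Gamma_mul_div _ _ (by simpa) (by simpa), ← hv,
    ProbabilityTheory.beta, Complex.Gamma_ofReal, Complex.Gamma_conj, norm_div, norm_mul,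
    RCLike.norm_conj, Complex.norm_of_nonneg hΓ.le, hre, Complex.ofReal_re,
    mul_div_right_comm, mul_div_right_comm, ← norm_div] at hbeta
  have hvre : v.re = u.re + d := by simp [hv]
  rw [hvre]
  exact le_of_mul_le_mul_right hbeta hΓ

end Gamma

section LorentzMean

/-- The mean of two Lorentzian profiles of width `α` centred at `±t`: an integrable majorant, on
the line `Re a = α`, of the product of the poles `1 / (|a + it| |a - it|)`. -/
noncomputable def lorentzMean (α t τ : ℝ) : ℝ :=
  ((α ^ 2 + (τ + t) ^ 2)⁻¹ + (α ^ 2 + (τ - t) ^ 2)⁻¹) / 2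

theorem inv_norm_mul_inv_norm_le_lorentzMean (α t τ : ℝ) :
    ‖(α : ℂ) + τ * I + t * I‖⁻¹ * ‖(α : ℂ) + τ * I - t * I‖⁻¹ ≤ lorentzMean α t τ := by
  have hplus : ‖(α : ℂ) + τ * I + t * I‖ ^ 2 = α ^ 2 + (τ + t) ^ 2 := by
    rw [← Complex.normSq_eq_norm_sq, Complex.normSq_apply]; simp; ring
  have hminus : ‖(α : ℂ) + τ * I - t * I‖ ^ 2 = α ^ 2 + (τ - t) ^ 2 := by
    rw [← Complex.normSq_eq_norm_sq, Complex.normSq_apply]; simp; ring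
  rw [lorentzMean, ← hplus, ← hminus, ← inv_pow, ← inv_pow]
  linarith [two_mul_le_add_sq ‖(α : ℂ) + τ * I + t * I‖⁻¹ ‖(α : ℂ) + τ * I - t * I‖⁻¹]

theorem lorentzMean_antitoneOn (t τ : ℝ) : AntitoneOn (lorentzMean · t τ) (Ioi 0) := by
  intro α (hα : 0 < α) β _ hαβ
  dsimp only [lorentzMean]
  gcongr

theorem inv_sq_add_sq_eq {α : ℝ} (hα : 0 < α) (x : ℝ) :
    (α ^ 2 + x ^ 2)⁻¹ = (α ^ 2)⁻¹ * (1 + (x / α) ^ 2)⁻¹ := by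
  field_simp

theorem integrable_inv_sq_add_sq {α : ℝ} (hα : 0 < α) :
    Integrable fun x : ℝ => (α ^ 2 + x ^ 2)⁻¹ := by
  simp only [inv_sq_add_sq_eq hα]
  exact (integrable_inv_one_add_sq.comp_div hα.ne').const_mul _

theorem integral_inv_sq_add_sq {α : ℝ} (hα : 0 < α) :
    ∫ x : ℝ, (α ^ 2 + x ^ 2)⁻¹ = π / α := by
  simp only [inv_sq_add_sq_eq hα]
  rw [integral_const_mul, Measure.integral_comp_div (fun x : ℝ => (1 + x ^ 2)⁻¹) α,
    integral_univ_inv_one_add_sq, abs_of_pos hα, smul_eq_mul]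
  field_simp

theorem integrable_lorentzMean {α : ℝ} (hα : 0 < α) (t : ℝ) : Integrable (lorentzMean α t) :=
  (((integrable_inv_sq_add_sq hα).comp_add_right t).add
    ((integrable_inv_sq_add_sq hα).comp_sub_right t)).div_const 2

theorem integral_lorentzMean {α : ℝ} (hα : 0 < α) (t : ℝ) :
    ∫ τ, lorentzMean α t τ = π / α := by
  have hint := integrable_inv_sq_add_sq hα
  simp only [lorentzMean]
  rw [integral_div, integral_add (hint.comp_add_right t) (hint.comp_sub_right t),
    integral_add_right_eq_self (fun x : ℝ => (α ^ 2 + x ^ 2)⁻¹) t,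
    integral_sub_right_eq_self (fun x : ℝ => (α ^ 2 + x ^ 2)⁻¹) t, integral_inv_sq_add_sq hα]
  ring

theorem tendsto_lorentzMean_cocompact (α t : ℝ) :
    Tendsto (lorentzMean α t) (cocompact ℝ) (𝓝 0) := by
  have hdecay : Tendsto (fun x : ℝ => (α ^ 2 + x ^ 2)⁻¹) (cocompact ℝ) (𝓝 0) := by
    refine tendsto_inv_atTop_zero.comp (tendsto_atTop_add_const_left _ _ ?_)
    simpa only [Function.comp_def, Real.norm_eq_abs, sq_abs] using
      (tendsto_pow_atTop two_ne_zero).comp (tendsto_norm_cocompact_atTop (E := ℝ))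
  have hplus := hdecay.comp (Homeomorph.addRight t).isClosedEmbedding.tendsto_cocompact
  have hminus := hdecay.comp (Homeomorph.subRight t).isClosedEmbedding.tendsto_cocompact
  unfold lorentzMean
  simpa using (hplus.add hminus).div_const 2

end LorentzMean

section GammaKernel

/-- The Gamma factor `Γ(a + it) Γ(a - it) Γ(p - a) / Γ(q + a)`. With `a = k + s` and `p = q = k` it
is the one of the Mellin–Barnes integral; `p = 1`, `q = 1 / 2` gives, up to a constant, the Mellin
transform of `sin (2 t arsinh x) / √(1 + x²)` at `1 - 2a`. -/
noncomputable def gammaKernel (p q t : ℝ) (a : ℂ) : ℂ :=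
  Complex.Gamma (a + t * I) * Complex.Gamma (a - t * I) *
    (Complex.Gamma (p - a) / Complex.Gamma (q + a))

/-- The constant in the bound of `gammaKernel p q t` on the line `Re a = α` by `lorentzMean α t`. -/
noncomputable def kernelConst (p q α : ℝ) : ℝ :=
  Real.Gamma (1 + α) ^ 2 * (Real.Gamma (p - α) / Real.Gamma (q + α))

theorem kernelConst_pos {p q α : ℝ} (hα : 0 < 1 + α) (hp : α < p) (hq : 0 < q + α) :
    0 < kernelConst p q α :=
  mul_pos (pow_pos (Real.Gamma_pos_of_pos hα) 2)
    (div_pos (Real.Gamma_pos_of_pos (sub_pos.mpr hp)) (Real.Gamma_pos_of_pos hq))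

theorem continuousAt_kernelConst {p q α : ℝ} (hα : 0 < 1 + α) (hp : α < p) (hq : 0 < q + α) :
    ContinuousAt (kernelConst p q) α := by
  refine ContinuousAt.mul (ContinuousAt.pow ?_ 2)
    (ContinuousAt.div ?_ ?_ (Real.Gamma_pos_of_pos hq).ne')
  · exact (continuousAt_Gamma_of_pos hα).comp (f := (1 + ·)) (by fun_prop)
  · exact (continuousAt_Gamma_of_pos (sub_pos.mpr hp)).comp (f := (p - ·)) (by fun_prop)
  · exact (continuousAt_Gamma_of_pos hq).comp (f := (q + ·)) (by fun_prop)

theorem differentiableAt_gammaKernel {p q : ℝ} (t : ℝ) {a : ℂ} (ha : 0 < a.re) (hp : a.re < p)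
    (hq : 0 < q + a.re) : DifferentiableAt ℂ (gammaKernel p q t) a := by
  have hΓ {g : ℂ → ℂ} (hg : DifferentiableAt ℂ g a) (hre : 0 < (g a).re) :
      DifferentiableAt ℂ (fun s => Complex.Gamma (g s)) a :=
    (differentiableAt_Gamma_of_re_pos hre).comp a hg
  refine ((hΓ ?_ ?_).mul (hΓ ?_ ?_)).mul ((hΓ ?_ ?_).div (hΓ ?_ ?_)
    (Complex.Gamma_ne_zero_of_re_pos ?_))
  all_goals first | fun_prop | simpa

variable {p q α : ℝ} (t : ℝ) (hα : 0 < α) (hp : α < p) (hpq : p - α < q + α)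

include hα hp hpq
theorem norm_gammaKernel_le (τ : ℝ) :
    ‖gammaKernel p q t (α + τ * I)‖ ≤ kernelConst p q α * lorentzMean α t τ := by
  have hplus := norm_Gamma_le_div_norm (s := (α : ℂ) + τ * I + t * I) (by simpa)
  have hminus := norm_Gamma_le_div_norm (s := (α : ℂ) + τ * I - t * I) (by simpa)
  have hratio := norm_Gamma_div_Gamma_le (u := p - (α + τ * I)) (v := q + (α + τ * I))
    (by simpa) (by simpa) (by simp)
  simp only [Complex.add_re, Complex.sub_re, Complex.re_ofReal_mul, Complex.ofReal_re, Complex.I_re,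
    mul_zero, add_zero, sub_zero] at hplus hminus hratio
  have hconst := kernelConst_pos (q := q) (by linarith) hp (by linarith)
  calc ‖gammaKernel p q t (α + τ * I)‖
    _ ≤ Real.Gamma (1 + α) / ‖(α : ℂ) + τ * I + t * I‖ *
          (Real.Gamma (1 + α) / ‖(α : ℂ) + τ * I - t * I‖) *
          (Real.Gamma (p - α) / Real.Gamma (q + α)) := by
      rw [gammaKernel, norm_mul, norm_mul]
      gcongr
    _ = kernelConst p q α *
          (‖(α : ℂ) + τ * I + t * I‖⁻¹ * ‖(α : ℂ) + τ * I - t * I‖⁻¹) := by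
      rw [kernelConst]; ring
    _ ≤ kernelConst p q α * lorentzMean α t τ := by
      gcongr; exact inv_norm_mul_inv_norm_le_lorentzMean α t τ

theorem continuous_gammaKernel_vertical :
    Continuous fun τ : ℝ => gammaKernel p q t (α + τ * I) := by
  refine continuous_iff_continuousAt.mpr fun τ => ?_
  have hdiff : DifferentiableAt ℂ (gammaKernel p q t) (α + τ * I) :=
    differentiableAt_gammaKernel t (by simpa) (by simpa) (by simp; linarith)
  exact hdiff.continuousAt.comp (f := fun τ : ℝ => (α : ℂ) + τ * I) (by fun_prop)

theorem integrable_gammaKernel_vertical :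
    Integrable fun τ : ℝ => gammaKernel p q t (α + τ * I) :=
  ((integrable_lorentzMean hα t).const_mul _).mono'
    (continuous_gammaKernel_vertical t hα hp hpq).aestronglyMeasurable
    (.of_forall (norm_gammaKernel_le t hα hp hpq))

theorem norm_integral_gammaKernel_mul_le {g : ℝ → ℂ} {B : ℝ} (hg : ∀ τ, ‖g τ‖ ≤ B) :
    ‖∫ τ : ℝ, gammaKernel p q t (α + τ * I) * g τ‖ ≤ kernelConst p q α * B * (π / α) := by
  have hbound (τ : ℝ) : ‖gammaKernel p q t (α + τ * I) * g τ‖ ≤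
      kernelConst p q α * B * lorentzMean α t τ := by
    rw [norm_mul, mul_right_comm]
    have hconst := norm_gammaKernel_le t hα hp hpq τ
    exact mul_le_mul hconst (hg τ) (norm_nonneg _) ((norm_nonneg _).trans hconst)
  rw [← integral_lorentzMean hα t, ← integral_const_mul]
  exact norm_integral_le_of_norm_le ((integrable_lorentzMean hα t).const_mul _)
    (.of_forall hbound)

end GammaKernel

section ContourShift

theorem tendsto_integral_horizontal {f : ℂ → ℂ} {x₁ x₂ : ℝ} {g : ℝ → ℝ} {l : Filter ℝ}
    (hbound : ∀ x ∈ uIcc x₁ x₂, ∀ y : ℝ, ‖f (x + y * I)‖ ≤ g y) (hg : Tendsto g l (𝓝 0)) :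
    Tendsto (fun y : ℝ => ∫ x in x₁..x₂, f (x + y * I)) l (𝓝 0) := by
  refine squeeze_zero_norm (a := fun y => g y * |x₂ - x₁|) (fun y => ?_)
    (by simpa using hg.mul_const |x₂ - x₁|)
  exact intervalIntegral.norm_integral_le_of_norm_le_const fun x hx =>
    hbound x (uIoc_subset_uIcc hx) y

theorem integral_vertical_eq_of_differentiableOn {f : ℂ → ℂ} {x₁ x₂ : ℝ} {g : ℝ → ℝ}
    (hf : DifferentiableOn ℂ f {s | s.re ∈ uIcc x₁ x₂})
    (hint₁ : Integrable fun y : ℝ => f (x₁ + y * I))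
    (hint₂ : Integrable fun y : ℝ => f (x₂ + y * I))
    (hbound : ∀ x ∈ uIcc x₁ x₂, ∀ y : ℝ, ‖f (x + y * I)‖ ≤ g y)
    (hg : Tendsto g (cocompact ℝ) (𝓝 0)) :
    ∫ y : ℝ, f (x₁ + y * I) = ∫ y : ℝ, f (x₂ + y * I) := by
  rw [cocompact_eq_atBot_atTop, tendsto_sup] at hg
  have hrect (R : ℝ) : I * ((∫ y in (-R)..R, f (x₂ + y * I)) - ∫ y in (-R)..R, f (x₁ + y * I)) =
      (∫ x in x₁..x₂, f (x + R * I)) - ∫ x in x₁..x₂, f (x + (-R : ℝ) * I) := by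
    have hzero := Complex.integral_boundary_rect_eq_zero_of_differentiableOn f
      (x₁ + (-R : ℝ) * I) (x₂ + R * I) (hf.mono fun s hs => by simpa using hs.1)
    simp only [Complex.add_re, Complex.add_im, Complex.re_ofReal_mul, Complex.im_ofReal_mul,
      Complex.ofReal_re, Complex.ofReal_im, Complex.I_re, Complex.I_im, mul_zero, mul_one,
      add_zero, zero_add, smul_eq_mul] at hzero
    linear_combination hzero
  have hvert (x : ℝ) (hint : Integrable fun y : ℝ => f (x + y * I)) :
      Tendsto (fun R : ℝ => ∫ y in (-R)..R, f (x + y * I)) atTop (𝓝 (∫ y : ℝ, f (x + y * I))) :=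
    intervalIntegral_tendsto_integral hint tendsto_neg_atTop_atBot tendsto_id
  have hlim := ((hvert x₂ hint₂).sub (hvert x₁ hint₁)).const_mul I
  have htop := tendsto_integral_horizontal hbound hg.2
  have hbot := (tendsto_integral_horizontal hbound hg.1).comp tendsto_neg_atTop_atBot
  simp only [hrect] at hlim
  have hdiff := tendsto_nhds_unique hlim (htop.sub hbot)
  rw [sub_zero, mul_eq_zero, sub_eq_zero] at hdiff
  exact (hdiff.resolve_left Complex.I_ne_zero).symm

end ContourShift

section MellinBarnesIntegral

variable {k : ℕ} {z : ℝ} (t : ℝ)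

theorem mbIntegrand_sub_eq (k : ℕ) (α : ℝ) (hz : 0 < z) (τ : ℝ) :
    mbIntegrand k t (α - k) z τ =
      gammaKernel k k t (α + τ * I) * (z : ℂ) ^ ((α : ℂ) + τ * I - k) := by
  rw [mbIntegrand, gammaKernel, Complex.cpow_def_of_ne_zero (by exact_mod_cast hz.ne'),
    Complex.ofReal_log hz.le, mul_div_assoc, mul_comm (Complex.log z)]
  push_cast
  ring_nf

theorem norm_cpow_vertical (hz : 0 < z) (x τ : ℝ) (k : ℕ) :
    ‖(z : ℂ) ^ ((x : ℂ) + τ * I - k)‖ = z ^ (x - k) := by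
  rw [Complex.norm_cpow_eq_rpow_re_of_pos hz]
  simp

theorem differentiable_cpow_sub (hz : 0 < z) (k : ℕ) :
    Differentiable ℂ fun a : ℂ => (z : ℂ) ^ (a - k) := fun _ =>
  (differentiableAt_id.sub_const _).const_cpow (.inl (by exact_mod_cast hz.ne'))

theorem integrable_mbIntegrand (hz : 0 < z) {α : ℝ} (hα : 0 < α) (hαk : α < k) :
    Integrable (mbIntegrand k t (α - k) z) := by
  rw [funext (mbIntegrand_sub_eq t k α hz)]
  have hcont : Continuous fun τ : ℝ => (z : ℂ) ^ ((α : ℂ) + τ * I - k) :=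
    (differentiable_cpow_sub hz k).continuous.comp
      (f := fun τ : ℝ => (α : ℂ) + τ * I) (by fun_prop)
  exact (integrable_gammaKernel_vertical t hα hαk (by linarith)).mul_bdd
    hcont.aestronglyMeasurable (.of_forall fun τ => (norm_cpow_vertical hz α τ k).le)

theorem norm_integral_mbIntegrand_le (hz : 0 < z) {α : ℝ} (hα : 0 < α) (hαk : α < k) :
    ‖∫ τ, mbIntegrand k t (α - k) z τ‖ ≤ kernelConst k k α * z ^ (α - k) * (π / α) := by
  rw [funext (mbIntegrand_sub_eq t k α hz)]
  exact norm_integral_gammaKernel_mul_le t hα hαk (by linarith)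
    fun τ => (norm_cpow_vertical hz α τ k).le

theorem exists_norm_gammaKernel_mul_cpow_le (hz : 0 < z) {a b : ℝ} (ha : 0 < a) (hb : b < k) :
    ∃ B : ℝ, ∀ x ∈ Icc a b, ∀ y : ℝ,
      ‖gammaKernel k k t (x + y * I) * (z : ℂ) ^ ((x : ℂ) + y * I - k)‖ ≤
        B * lorentzMean a t y := by
  obtain ⟨B, hB⟩ : BddAbove ((fun x => kernelConst k k x * z ^ (x - k)) '' Icc a b) := by
    refine isCompact_Icc.bddAbove_image fun x hx => ContinuousAt.continuousWithinAt ?_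
    have hpow : ContinuousAt (fun x : ℝ => z ^ (x - k)) x :=
      (Real.continuousAt_const_rpow hz.ne').comp (f := fun x : ℝ => x - k) (by fun_prop)
    exact (continuousAt_kernelConst (by linarith [hx.1]) (by linarith [hx.2])
      (by linarith [hx.1, hx.2])).mul hpow
  refine ⟨B, fun x hx y => ?_⟩
  have hx0 : 0 < x := ha.trans_le hx.1
  have hxk : x < k := hx.2.trans_lt hb
  have hBx : kernelConst k k x * z ^ (x - k) ≤ B := hB (mem_image_of_mem _ hx)
  have hconst := kernelConst_pos (p := k) (q := k) (α := x) (by linarith) hxk (by linarith)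
  have hmono := lorentzMean_antitoneOn t y ha hx0 hx.1
  rw [norm_mul, norm_cpow_vertical hz]
  calc ‖gammaKernel k k t (x + y * I)‖ * z ^ (x - k)
    _ ≤ kernelConst k k x * lorentzMean x t y * z ^ (x - k) := by
      gcongr; exact norm_gammaKernel_le t hx0 hxk (by linarith) y
    _ = kernelConst k k x * z ^ (x - k) * lorentzMean x t y := by ring
    _ ≤ B * lorentzMean a t y := by
      have : 0 ≤ lorentzMean x t y := by unfold lorentzMean; positivity
      have : 0 ≤ B := hBx.trans' (by positivity)
      gcongr

theorem integral_mbIntegrand_eq (hz : 0 < z) {α β : ℝ} (hα : 0 < α) (hαk : α < k) (hβ : 0 < β)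
    (hβk : β < k) :
    ∫ τ, mbIntegrand k t (α - k) z τ = ∫ τ, mbIntegrand k t (β - k) z τ := by
  have hmin : 0 < min α β := lt_min hα hβ
  have hmax : max α β < k := max_lt hαk hβk
  have hintα := integrable_mbIntegrand t hz hα hαk
  have hintβ := integrable_mbIntegrand t hz hβ hβk
  rw [funext (mbIntegrand_sub_eq t k _ hz)] at hintα hintβ
  simp only [mbIntegrand_sub_eq t k _ hz]
  obtain ⟨B, hB⟩ := exists_norm_gammaKernel_mul_cpow_le t hz hmin hmax
  refine integral_vertical_eq_of_differentiableOn
    (f := fun a => gammaKernel k k t a * (z : ℂ) ^ (a - k)) (fun a ha => ?_) hintα hintβ hB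
    (by simpa using (tendsto_lorentzMean_cocompact (min α β) t).const_mul B)
  have ha0 : 0 < a.re := hmin.trans_le ha.1
  have hak : a.re < k := ha.2.trans_lt hmax
  exact ((differentiableAt_gammaKernel t ha0 hak (by linarith)).mul
    (differentiable_cpow_sub hz k a)).differentiableWithinAt

theorem kernelConst_add_one_le {p q α : ℝ} (hα : 0 < 1 + α) (hp : α < p) (hpq : p - α ≤ q + α) :
    kernelConst (p + 1) (q + 1) α ≤ kernelConst p q α := by
  have hpα : 0 < p - α := sub_pos.mpr hp
  have hqα : 0 < q + α := hpα.trans_le hpq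
  have hΓ := div_pos (Real.Gamma_pos_of_pos hpα) (Real.Gamma_pos_of_pos hqα)
  rw [kernelConst, kernelConst, add_sub_right_comm, add_right_comm, Real.Gamma_add_one hpα.ne',
    Real.Gamma_add_one hqα.ne', mul_div_mul_comm]
  gcongr
  exact mul_le_of_le_one_left hΓ.le ((div_le_one hqα).mpr hpq)

theorem kernelConst_natCast_le_one {α : ℝ} (hα : 0 < α) (hα1 : α < 1) (hk : 1 ≤ k) :
    kernelConst k k α ≤ kernelConst 1 1 α := by
  induction k, hk using Nat.le_induction with
  | base => simp
  | succ k hk ih =>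
    have : (1 : ℝ) ≤ k := by exact_mod_cast hk
    push_cast
    exact (kernelConst_add_one_le (by linarith) (by linarith) (by linarith)).trans ih

/-- The line of integration is moved to `Re s = β - k` with `β` of size `1 / (1 + |log z|)`, which
keeps `z ^ β` bounded. -/
theorem exists_norm_integral_mbIntegrand_le :
    ∃ C : ℝ, 0 < C ∧ ∀ (k : ℕ) (t z α : ℝ), 0 < z → 0 < α → α < k →
      ‖∫ τ, mbIntegrand k t (α - k) z τ‖ ≤ C * (z ^ (-k : ℝ) * (1 + |Real.log z|)) := by
  obtain ⟨B, hB⟩ : BddAbove (kernelConst 1 1 '' Icc 0 (1 / 2)) :=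
    isCompact_Icc.bddAbove_image fun x hx => (continuousAt_kernelConst (by linarith [hx.1])
      (by linarith [hx.2]) (by linarith [hx.1])).continuousWithinAt
  have hB0 : 0 < B := (kernelConst_pos (by norm_num) (by norm_num) (by norm_num)).trans_le
    (hB (mem_image_of_mem _ (right_mem_Icc.mpr (by norm_num))))
  refine ⟨B * Real.exp 1 * (2 * π), by positivity, fun k t z α hz hα hαk => ?_⟩
  have hk : (1 : ℝ) ≤ k := by exact_mod_cast (Nat.cast_pos (α := ℝ)).mp (hα.trans hαk)
  set L := |Real.log z|
  have hL : 0 ≤ L := abs_nonneg _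
  obtain ⟨β, hβ, hβ1, hβL, hπβ⟩ : ∃ β : ℝ, 0 < β ∧ β ≤ 1 / 2 ∧ L * β ≤ 1 ∧
      π / β = 2 * π * (1 + L) := by
    refine ⟨1 / (2 * (1 + L)), by positivity, ?_, ?_, by field_simp⟩
    · exact one_div_le_one_div_of_le two_pos (by linarith)
    · rw [mul_one_div, div_le_one (by positivity)]; linarith
  have hconst : kernelConst k k β ≤ B :=
    (kernelConst_natCast_le_one hβ (by linarith) (by exact_mod_cast hk)).trans
      (hB (mem_image_of_mem _ ⟨hβ.le, hβ1⟩))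
  have hpow : z ^ (β - k) ≤ Real.exp 1 * z ^ (-k : ℝ) := by
    rw [sub_eq_add_neg, Real.rpow_add hz]
    gcongr
    rw [Real.rpow_def_of_pos hz]
    gcongr
    exact (mul_le_mul_of_nonneg_right (le_abs_self _) hβ.le).trans hβL
  calc ‖∫ τ, mbIntegrand k t (α - k) z τ‖
    _ = ‖∫ τ, mbIntegrand k t (β - k) z τ‖ := by
      rw [integral_mbIntegrand_eq t hz hα hαk hβ (by linarith)]
    _ ≤ kernelConst k k β * z ^ (β - k) * (π / β) :=
      norm_integral_mbIntegrand_le t hz hβ (by linarith)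
    _ ≤ B * (Real.exp 1 * z ^ (-k : ℝ)) * (2 * π * (1 + L)) := by rw [hπβ]; gcongr
    _ = B * Real.exp 1 * (2 * π) * (z ^ (-k : ℝ) * (1 + L)) := by ring

end MellinBarnesIntegral

section MellinTransform

/-- The decreasing substitution `x = sinh (-log y / 2)` from `y ∈ (0, 1)` to `x ∈ (0, ∞)`, the
inverse of `y = exp (-2 arsinh x)`. -/
noncomputable def sinhSubst (y : ℝ) : ℝ := Real.sinh (-Real.log y / 2)

theorem image_sinhSubst : sinhSubst '' Ioo 0 1 = Ioi 0 := by
  refine Subset.antisymm ?_ fun x (hx : 0 < x) => ⟨Real.exp (-(2 * Real.arsinh x)), ?_, ?_⟩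
  · rintro _ ⟨y, hy, rfl⟩
    exact Real.sinh_pos_iff.mpr (by linarith [Real.log_neg hy.1 hy.2])
  · exact ⟨Real.exp_pos _, by simpa using Real.arsinh_pos_iff.mpr hx⟩
  · rw [sinhSubst, Real.log_exp, neg_neg, mul_div_cancel_left₀ _ two_ne_zero, Real.sinh_arsinh]

theorem injOn_sinhSubst : InjOn sinhSubst (Ioo 0 1) := by
  intro x hx y hy hxy
  have hlog := Real.sinh_injective hxy
  exact Real.log_injOn_pos (mem_Ioi.mpr hx.1) (mem_Ioi.mpr hy.1) (by linarith)

theorem hasDerivWithinAt_sinhSubst {y : ℝ} (hy : y ∈ Ioo (0 : ℝ) 1) :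
    HasDerivWithinAt sinhSubst (Real.cosh (-Real.log y / 2) * (-y⁻¹ / 2)) (Ioo 0 1) y :=
  ((Real.hasDerivAt_log hy.1.ne').neg.div_const 2).sinh.hasDerivWithinAt

theorem sinhSubst_cpow {y : ℝ} (hy : y ∈ Ioo (0 : ℝ) 1) (s : ℂ) :
    (sinhSubst y : ℂ) ^ (s - 1) =
      2 * 2 ^ (-s) * ((1 - (y : ℂ)) ^ (s - 1) * (y : ℂ) ^ ((1 - s) / 2)) := by
  have hfactor : sinhSubst y = (1 - y) * (y ^ (-(1 / 2) : ℝ) * 2⁻¹) := by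
    rw [sinhSubst, Real.sinh_eq, Real.rpow_def_of_pos hy.1,
      show -(-Real.log y / 2) = Real.log y + Real.log y * -(1 / 2) by ring, Real.exp_add,
      Real.exp_log hy.1]
    ring_nf
  have hpow : ((y ^ (-(1 / 2) : ℝ) : ℝ) : ℂ) ^ (s - 1) = (y : ℂ) ^ ((1 - s) / 2) := by
    rw [← Complex.cpow_mul_ofReal_nonneg hy.1.le]
    push_cast; ring_nf
  have htwo : ((2⁻¹ : ℝ) : ℂ) ^ (s - 1) = 2 * 2 ^ (-s) := by
    have harg : Complex.arg 2 ≠ π := by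
      rw [Complex.ofNat_arg]; exact Real.pi_pos.ne
    rw [Complex.ofReal_inv, Complex.ofReal_ofNat, Complex.inv_cpow _ _ harg, ← Complex.cpow_neg,
      neg_sub, sub_eq_add_neg, Complex.cpow_add _ _ two_ne_zero, Complex.cpow_one]
  have hy1 : 0 ≤ 1 - y := by linarith [hy.2]
  have hyp : 0 ≤ y ^ (-(1 / 2) : ℝ) := Real.rpow_nonneg hy.1.le _
  rw [hfactor, Complex.ofReal_mul, Complex.mul_cpow_ofReal_nonneg hy1 (by positivity),
    Complex.ofReal_mul, Complex.mul_cpow_ofReal_nonneg hyp (by positivity), hpow, htwo]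
  push_cast; ring

/-- The function `exp (-2 w arsinh x) / √(1 + x²)`; the choices `w = ±it` produce
`sin (2 t arsinh x) / √(1 + x²)`. -/
noncomputable def expArsinh (w : ℂ) (x : ℝ) : ℂ :=
  Complex.exp (-2 * w * Real.arsinh x) / √(1 + x ^ 2)

theorem abs_deriv_smul_expArsinh_sinhSubst (w s : ℂ) {y : ℝ} (hy : y ∈ Ioo (0 : ℝ) 1) :
    |Real.cosh (-Real.log y / 2) * (-y⁻¹ / 2)| •
        ((sinhSubst y : ℂ) ^ (s - 1) • expArsinh w (sinhSubst y)) =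
      2 ^ (-s) * ((y : ℂ) ^ ((1 - s) / 2 + w - 1) * (1 - (y : ℂ)) ^ (s - 1)) := by
  have hy0 := hy.1
  have hyc : (y : ℂ) ≠ 0 := by exact_mod_cast hy0.ne'
  have hcosh := Real.cosh_pos (-Real.log y / 2)
  have hexp : expArsinh w (sinhSubst y) = (y : ℂ) ^ w / Real.cosh (-Real.log y / 2) := by
    rw [expArsinh, sinhSubst, Real.arsinh_sinh, ← Real.cosh_sq', Real.sqrt_sq hcosh.le,
      Complex.cpow_def_of_ne_zero hyc, ← Complex.ofReal_log hy0.le]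
    push_cast; ring_nf
  rw [hexp, sinhSubst_cpow hy, abs_mul, abs_of_pos hcosh, abs_div, abs_neg,
    abs_of_pos (inv_pos.mpr hy0), abs_two, Complex.real_smul, smul_eq_mul,
    Complex.cpow_sub _ _ hyc, Complex.cpow_add _ _ hyc, Complex.cpow_one]
  have hcc : ((Real.cosh (-Real.log y / 2) : ℝ) : ℂ) ≠ 0 := by exact_mod_cast hcosh.ne'
  rw [Complex.ofReal_mul]
  generalize ((Real.cosh (-Real.log y / 2) : ℝ) : ℂ) = c at hcc ⊢
  push_cast
  field_simp

theorem hasMellin_expArsinh {w s : ℂ} (hs : 0 < s.re) (hw : 0 < ((1 - s) / 2 + w).re) :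
    HasMellin (expArsinh w) s (2 ^ (-s) * Complex.betaIntegral ((1 - s) / 2 + w) s) := by
  have hbeta := Complex.betaIntegral_convergent hw hs
  rw [intervalIntegrable_iff_integrableOn_Ioo_of_le zero_le_one] at hbeta
  have hsubst : EqOn _ _ (Ioo (0 : ℝ) 1) := fun y hy => abs_deriv_smul_expArsinh_sinhSubst w s hy
  have hderiv : ∀ y ∈ Ioo (0 : ℝ) 1, _ := fun y hy => hasDerivWithinAt_sinhSubst hy
  constructor
  · rw [MellinConvergent, ← image_sinhSubst,
      integrableOn_image_iff_integrableOn_abs_deriv_smul measurableSet_Ioo hderiv injOn_sinhSubst,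
      integrableOn_congr_fun hsubst measurableSet_Ioo]
    exact hbeta.const_mul _
  · rw [mellin, ← image_sinhSubst,
      integral_image_eq_integral_abs_deriv_smul measurableSet_Ioo hderiv injOn_sinhSubst,
      setIntegral_congr_fun measurableSet_Ioo hsubst, integral_const_mul, Complex.betaIntegral,
      intervalIntegral.integral_of_le zero_le_one, integral_Ioc_eq_integral_Ioo]

/-- The function `sin (2 t arsinh x) / √(1 + x²)`, as a complex-valued function. -/
noncomputable def sinArsinh (t x : ℝ) : ℂ := (Real.sin (2 * t * Real.arsinh x) / √(1 + x ^ 2) : ℝ)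

theorem sinArsinh_eq (t : ℝ) :
    sinArsinh t = fun x => (2 * I)⁻¹ • (expArsinh (-(t * I)) x - expArsinh (t * I) x) := by
  ext x
  rw [sinArsinh, expArsinh, expArsinh, smul_eq_mul, mul_inv, Complex.inv_I]
  push_cast
  rw [Complex.sin, show -(2 * t * Real.arsinh x) * I = -2 * (t * I) * Real.arsinh x by ring,
    show 2 * t * Real.arsinh x * I = -2 * -(t * I) * Real.arsinh x by ring]
  ring

theorem hasMellin_sinArsinh (t : ℝ) {s : ℂ} (hs : 0 < s.re) (hs1 : s.re < 1) :
    HasMellin (sinArsinh t) s (2 ^ (-s) / (2 * I) *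
      (Complex.betaIntegral ((1 - s) / 2 - t * I) s -
        Complex.betaIntegral ((1 - s) / 2 + t * I) s)) := by
  have hminus := hasMellin_expArsinh (w := -(t * I)) hs (by simp; linarith)
  have hplus := hasMellin_expArsinh (w := t * I) hs (by simp; linarith)
  have hsub := hasMellin_sub hminus.1 hplus.1
  have hsmul := hasMellin_const_smul hsub.1 (2 * I)⁻¹
  rw [sinArsinh_eq]
  refine ⟨hsmul.1, hsmul.2.trans ?_⟩
  rw [hsub.2, hminus.2, hplus.2, smul_eq_mul, ← sub_eq_add_neg]
  ring

theorem inv_Gamma_one_sub {w : ℂ} (hw : 0 < w.re) :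
    (Complex.Gamma (1 - w))⁻¹ = Complex.Gamma w * Complex.sin (π * w) / π := by
  have hreflect := Complex.Gamma_mul_Gamma_one_sub w
  have hΓ := Complex.Gamma_ne_zero_of_re_pos hw
  have hπ : (π : ℂ) ≠ 0 := Complex.ofReal_ne_zero.mpr Real.pi_ne_zero
  by_cases hsin : Complex.sin (π * w) = 0
  · rw [hsin, div_zero, mul_eq_zero] at hreflect
    rw [hsin, hreflect.resolve_left hΓ]
    simp
  · rw [eq_div_iff hsin] at hreflect
    have hΓ' : Complex.Gamma (1 - w) ≠ 0 := fun h => hπ (by rw [← hreflect, h, mul_zero, zero_mul])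
    rw [eq_div_iff hπ, inv_mul_eq_div, div_eq_iff hΓ']
    linear_combination -hreflect

theorem Gamma_half_add_mul_Gamma_half_sub {a : ℂ} (ha : -(1 / 2) < a.re) (ha' : a.re < 1 / 2) :
    Complex.Gamma (1 / 2 + a) * Complex.Gamma (1 / 2 - a) * Complex.cos (π * a) = π := by
  have hinv := inv_Gamma_one_sub (w := 1 / 2 + a) (by simp; linarith)
  have hΓ : Complex.Gamma (1 / 2 - a) ≠ 0 :=
    Complex.Gamma_ne_zero_of_re_pos (by simp; linarith)
  have hπ : (π : ℂ) ≠ 0 := Complex.ofReal_ne_zero.mpr Real.pi_ne_zero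
  rw [show (1 : ℂ) - (1 / 2 + a) = 1 / 2 - a by ring,
    show (π : ℂ) * (1 / 2 + a) = π * a + π / 2 by ring, Complex.sin_add_pi_div_two] at hinv
  rw [eq_div_iff hπ, inv_mul_eq_div, div_eq_iff hΓ] at hinv
  linear_combination -hinv

theorem sq_sqrt_pi : (√π : ℂ) ^ 2 = π := by
  exact_mod_cast Real.sq_sqrt Real.pi_pos.le

theorem sqrt_pi_ne_zero : (√π : ℂ) ≠ 0 := by
  exact_mod_cast (Real.sqrt_pos.mpr Real.pi_pos).ne'

theorem two_cpow_mul_Gamma_one_sub_two_mul {a : ℂ} (ha : -(1 / 2) < a.re) (ha' : a.re < 1 / 2) :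
    2 ^ (2 * a) * Complex.Gamma (1 - 2 * a) * Complex.cos (π * a) =
      √π * (Complex.Gamma (1 - a) / Complex.Gamma (1 / 2 + a)) := by
  have hdup := Complex.Gamma_mul_Gamma_add_half (1 / 2 - a)
  rw [show (1 / 2 - a + 1 / 2 : ℂ) = 1 - a by ring, show 2 * (1 / 2 - a) = 1 - 2 * a by ring,
    sub_sub_cancel] at hdup
  have hcos := Gamma_half_add_mul_Gamma_half_sub ha ha'
  have hΓ : Complex.Gamma (1 / 2 + a) ≠ 0 :=
    Complex.Gamma_ne_zero_of_re_pos (by simp; linarith)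
  rw [mul_div_assoc', eq_div_iff hΓ]
  apply mul_left_cancel₀ sqrt_pi_ne_zero
  linear_combination (-Complex.cos (π * a) * Complex.Gamma (1 / 2 + a)) * hdup +
    Complex.Gamma (1 - a) * hcos - Complex.Gamma (1 - a) * sq_sqrt_pi

theorem mellin_sinArsinh (t : ℝ) {a : ℂ} (ha : 0 < a.re) (ha' : a.re < 1 / 2) :
    mellin (sinArsinh t) (1 - 2 * a) =
      Real.sinh (π * t) / (2 * √π) * gammaKernel 1 (1 / 2) t a := by
  have hs : 0 < (1 - 2 * a).re := by simp; linarith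
  have hsin : Complex.sin (π * (a + t * I)) - Complex.sin (π * (a - t * I)) =
      2 * Complex.cos (π * a) * (Complex.sinh (π * t) * I) := by
    rw [mul_add, mul_sub, ← mul_assoc (π : ℂ) t I, Complex.sin_add, Complex.sin_sub,
      Complex.sin_mul_I]
    ring
  have hpow : (2 : ℂ) ^ (2 * a) = 2 ^ (-(1 - 2 * a)) * 2 := by
    rw [neg_sub, Complex.cpow_sub _ _ two_ne_zero, Complex.cpow_one, div_mul_cancel₀ _ two_ne_zero]
  have hkey := two_cpow_mul_Gamma_one_sub_two_mul (by linarith) ha'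
  rw [(hasMellin_sinArsinh t hs (by simp; linarith)).2, sub_sub_cancel,
    mul_div_cancel_left₀ _ two_ne_zero, Complex.betaIntegral_eq_Gamma_mul_div _ _ (by simpa) hs,
    Complex.betaIntegral_eq_Gamma_mul_div _ _ (by simpa) hs,
    show a - t * I + (1 - 2 * a) = 1 - (a + t * I) by ring,
    show a + t * I + (1 - 2 * a) = 1 - (a - t * I) by ring, div_eq_mul_inv _ (Complex.Gamma _),
    div_eq_mul_inv _ (Complex.Gamma _), inv_Gamma_one_sub (by simpa), inv_Gamma_one_sub (by simpa)]
  have hI := Complex.I_ne_zero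
  have hπ := sqrt_pi_ne_zero
  have hπ' : (π : ℂ) ≠ 0 := Complex.ofReal_ne_zero.mpr Real.pi_ne_zero
  set s := (2 : ℂ) ^ (-(1 - 2 * a))
  calc _ = s / (2 * I) * (Complex.Gamma (a - t * I) * Complex.Gamma (a + t * I) *
          Complex.Gamma (1 - 2 * a) / π *
          (Complex.sin (π * (a + t * I)) - Complex.sin (π * (a - t * I)))) := by ring
    _ = Complex.Gamma (a - t * I) * Complex.Gamma (a + t * I) * Complex.sinh (π * t) / (2 * π) *
          (2 ^ (2 * a) * Complex.Gamma (1 - 2 * a) * Complex.cos (π * a)) := by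
      rw [hsin, hpow]; field_simp
    _ = Real.sinh (π * t) / (2 * √π) * gammaKernel 1 (1 / 2) t a := by
      rw [hkey, gammaKernel]
      push_cast
      generalize Complex.sinh (π * t) = σ
      rw [← sq_sqrt_pi]
      field_simp

/-- Mellin inversion along `Re a = α`, in the variable `a = (1 - s) / 2`. -/
theorem integral_cpow_mul_mellin_eq {f : ℝ → ℂ} {α : ℝ} {g : ℝ → ℂ}
    (hg : ∀ τ : ℝ, mellin f (1 - 2 * (α + τ * I)) = g τ) (hint : Integrable g)
    (hconv : MellinConvergent f (1 - 2 * α : ℝ)) {x : ℝ} (hx : 0 < x) (hf : ContinuousAt f x) :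
    ∫ τ : ℝ, (x : ℂ) ^ (2 * ((α : ℂ) + τ * I) - 1) * g τ = π * f x := by
  have hline (τ : ℝ) : ((1 - 2 * α : ℝ) : ℂ) + (-2 * τ : ℝ) * I = 1 - 2 * (α + τ * I) := by
    push_cast; ring
  have hvert : Complex.VerticalIntegrable (mellin f) (1 - 2 * α) := by
    rw [Complex.VerticalIntegrable,
      ← integrable_comp_mul_left_iff _ (show (-2 : ℝ) ≠ 0 by norm_num)]
    simpa only [hline, hg] using hint
  have hinv := mellinInv_mellin_eq (1 - 2 * α) f hx hconv hvert hf
  have hscale := Measure.integral_comp_mul_left (fun y : ℝ =>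
    (x : ℂ) ^ (-(((1 - 2 * α : ℝ) : ℂ) + y * I)) • mellin f ((1 - 2 * α : ℝ) + y * I)) (-2)
  simp only [hline, hg, smul_eq_mul, neg_sub] at hscale
  rw [hscale, ← hinv, mellinInv, abs_inv, abs_neg, abs_two, Complex.real_smul, Complex.real_smul,
    ← mul_assoc]
  congr 1
  have hπ : (π : ℂ) ≠ 0 := Complex.ofReal_ne_zero.mpr Real.pi_ne_zero
  push_cast
  field_simp

theorem continuous_sinArsinh (t : ℝ) : Continuous (sinArsinh t) := by
  have hsin := Real.continuous_sin.comp ((continuous_const_mul (2 * t)).comp Real.continuous_arsinh)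
  refine Complex.continuous_ofReal.comp (hsin.div (by fun_prop) fun x => ?_)
  positivity

theorem integral_cpow_mul_gammaKernel_eq (t : ℝ) {α : ℝ} (hα : 1 / 4 < α) (hα' : α < 1 / 2) {x : ℝ}
    (hx : 0 < x) :
    Real.sinh (π * t) * ∫ τ : ℝ, (x : ℂ) ^ (2 * ((α : ℂ) + τ * I) - 1) *
      gammaKernel 1 (1 / 2) t (α + τ * I) = 2 * √π * π * sinArsinh t x := by
  have hinv := integral_cpow_mul_mellin_eq
    (fun τ => mellin_sinArsinh t (a := α + τ * I) (by simp; linarith) (by simpa using hα'))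
    ((integrable_gammaKernel_vertical t (by linarith) (by linarith) (by linarith)).const_mul _)
    (hasMellin_sinArsinh t (by simp; linarith) (by simp; linarith)).1 hx
    (continuous_sinArsinh t).continuousAt
  simp only [mul_left_comm _ (Real.sinh (π * t) / (2 * √π) : ℂ)] at hinv
  rw [integral_const_mul] at hinv
  have hπ := sqrt_pi_ne_zero
  field_simp at hinv
  linear_combination hinv

end MellinTransform

section SineMoment

theorem sin_pos_of_mem_Ioo {φ : ℝ} (hφ : φ ∈ Ioo 0 (π / 2)) : 0 < Real.sin φ :=
  Real.sin_pos_of_pos_of_lt_pi hφ.1 (by linarith [hφ.2, Real.pi_pos])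

theorem cos_pos_of_mem_Ioo {φ : ℝ} (hφ : φ ∈ Ioo 0 (π / 2)) : 0 < Real.cos φ :=
  Real.cos_pos_of_mem_Ioo ⟨by linarith [hφ.1, Real.pi_pos], hφ.2⟩

theorem image_sin_sq : (fun φ => Real.sin φ ^ 2) '' Ioo 0 (π / 2) = Ioo 0 1 := by
  refine Subset.antisymm ?_ fun y hy => ⟨Real.arcsin √y, ⟨?_, ?_⟩, ?_⟩
  · rintro _ ⟨φ, hφ, rfl⟩
    have hsin := sin_pos_of_mem_Ioo hφ
    have hcos := cos_pos_of_mem_Ioo hφ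
    exact ⟨by positivity, by linarith [Real.sin_sq_add_cos_sq φ, sq_pos_of_pos hcos]⟩
  · exact Real.arcsin_pos.mpr (Real.sqrt_pos.mpr hy.1)
  · exact Real.arcsin_lt_pi_div_two.mpr ((Real.sqrt_lt' one_pos).mpr (by linarith [hy.2]))
  · have hy1 : √y ≤ 1 := Real.sqrt_le_one.mpr hy.2.le
    simp only [Real.sin_arcsin (by linarith [Real.sqrt_nonneg y]) hy1, Real.sq_sqrt hy.1.le]

theorem injOn_sin_sq : InjOn (fun φ => Real.sin φ ^ 2) (Ioo 0 (π / 2)) := by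
  intro x hx y hy hxy
  have hsin := (sq_eq_sq₀ (sin_pos_of_mem_Ioo hx).le (sin_pos_of_mem_Ioo hy).le).mp hxy
  exact Real.injOn_sin ⟨by linarith [hx.1, Real.pi_pos], hx.2.le⟩
    ⟨by linarith [hy.1, Real.pi_pos], hy.2.le⟩ hsin

theorem sq_cpow_sub_one_mul_self {x : ℝ} (hx : 0 < x) (u : ℂ) :
    ((x : ℂ) ^ 2) ^ (u - 1) * x = (x : ℂ) ^ (2 * u - 1) := by
  rw [show 2 * u - 1 = ((2 : ℝ) : ℂ) * (u - 1) + 1 by push_cast; ring,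
    Complex.cpow_add _ _ (Complex.ofReal_ne_zero.mpr hx.ne'), Complex.cpow_one,
    Complex.cpow_mul_ofReal_nonneg hx.le, Real.rpow_two, Complex.ofReal_pow]

theorem integral_sin_cpow_mul_cos_cpow (u v : ℂ) :
    ∫ φ in Ioo 0 (π / 2), (Real.sin φ : ℂ) ^ (2 * u - 1) * (Real.cos φ : ℂ) ^ (2 * v - 1) =
      Complex.betaIntegral u v / 2 := by
  have hderiv : ∀ φ ∈ Ioo 0 (π / 2), HasDerivWithinAt (fun φ => Real.sin φ ^ 2)
      (2 * Real.sin φ * Real.cos φ) (Ioo 0 (π / 2)) φ := fun φ _ => by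
    simpa using ((Real.hasDerivAt_sin φ).fun_pow 2).hasDerivWithinAt
  have hsubst : EqOn (fun φ => |2 * Real.sin φ * Real.cos φ| •
      (((Real.sin φ ^ 2 : ℝ) : ℂ) ^ (u - 1) * (1 - ((Real.sin φ ^ 2 : ℝ) : ℂ)) ^ (v - 1)))
      (fun φ => 2 * ((Real.sin φ : ℂ) ^ (2 * u - 1) * (Real.cos φ : ℂ) ^ (2 * v - 1)))
      (Ioo 0 (π / 2)) := fun φ hφ => by
    have hsin := sin_pos_of_mem_Ioo hφ
    have hcos := cos_pos_of_mem_Ioo hφ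
    have hcos_sq : 1 - ((Real.sin φ ^ 2 : ℝ) : ℂ) = (Real.cos φ : ℂ) ^ 2 := by
      rw [Real.sin_sq]; push_cast; ring
    beta_reduce
    rw [abs_of_pos (by positivity), Complex.real_smul, hcos_sq, ← sq_cpow_sub_one_mul_self hsin,
      ← sq_cpow_sub_one_mul_self hcos, Complex.ofReal_pow, Complex.ofReal_mul, Complex.ofReal_mul,
      Complex.ofReal_ofNat]
    ring
  rw [Complex.betaIntegral, intervalIntegral.integral_of_le zero_le_one,
    integral_Ioc_eq_integral_Ioo, ← image_sin_sq,
    integral_image_eq_integral_abs_deriv_smul measurableSet_Ioo hderiv injOn_sin_sq,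
    setIntegral_congr_fun measurableSet_Ioo hsubst, integral_const_mul,
    mul_div_cancel_left₀ _ two_ne_zero]

theorem integrableOn_sin_rpow {p : ℝ} (hp : -1 < p) :
    IntegrableOn (fun φ => Real.sin φ ^ p) (Ioo 0 (π / 2)) := by
  have hmajorant : IntegrableOn (fun φ : ℝ => 1 + (2 / π) ^ p * φ ^ p) (Ioo 0 (π / 2)) := by
    have hpow := intervalIntegral.intervalIntegrable_rpow' (a := 0) (b := π / 2) hp
    rw [intervalIntegrable_iff_integrableOn_Ioo_of_le (by positivity)] at hpow
    exact (integrableOn_const (by simp)).add (hpow.const_mul _)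
  refine hmajorant.mono' (ContinuousOn.aestronglyMeasurable (fun φ hφ => ?_) measurableSet_Ioo)
    ((ae_restrict_iff' measurableSet_Ioo).mpr (.of_forall fun φ hφ => ?_))
  · exact (Real.continuous_sin.continuousAt.rpow_const
      (Or.inl (sin_pos_of_mem_Ioo hφ).ne')).continuousWithinAt
  have hsin := sin_pos_of_mem_Ioo hφ
  have hφ0 := hφ.1
  rw [Real.norm_of_nonneg (by positivity)]
  rcases le_total 0 p with hp0 | hp0
  · have hle_one := Real.rpow_le_one hsin.le (Real.sin_le_one φ) hp0
    have hnonneg : 0 ≤ (2 / π) ^ p * φ ^ p := by positivity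
    linarith
  · have hjordan := Real.rpow_le_rpow_of_nonpos (by positivity) (Real.mul_le_sin hφ0.le hφ.2.le) hp0
    rw [Real.mul_rpow (by positivity) hφ0.le] at hjordan
    linarith

theorem integrableOn_sin_cpow_mul {g : ℝ → ℝ} (hg : Continuous g) (hg1 : ∀ φ, |g φ| ≤ 1) {a : ℂ}
    (ha : 0 < a.re) :
    IntegrableOn (fun φ => (Real.sin φ : ℂ) ^ (2 * a - 1) * g φ) (Ioo 0 (π / 2)) := by
  refine (integrableOn_sin_rpow (p := 2 * a.re - 1) (by linarith)).mono'
    (ContinuousOn.aestronglyMeasurable (fun φ hφ => ?_) measurableSet_Ioo)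
    ((ae_restrict_iff' measurableSet_Ioo).mpr (.of_forall fun φ hφ => ?_))
  · have hcpow : ContinuousAt (fun φ => (Real.sin φ : ℂ) ^ (2 * a - 1)) φ :=
      ContinuousAt.cpow (by fun_prop) continuousAt_const
        (Complex.ofReal_mem_slitPlane.mpr (sin_pos_of_mem_Ioo hφ))
    exact (hcpow.mul (by fun_prop)).continuousWithinAt
  · have hsin := sin_pos_of_mem_Ioo hφ
    rw [norm_mul, Complex.norm_cpow_eq_rpow_re_of_pos hsin, Complex.norm_real]
    simpa using mul_le_of_le_one_right (Real.rpow_nonneg hsin.le (2 * a.re - 1)) (hg1 φ)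

/-- The moment `∫ (sin φ)^(2a-1) sin (K φ) dφ` over `(0, π/2)`, whose closed form for odd `K` is a
quotient of Gamma functions. -/
noncomputable def sineMoment (K : ℝ) (a : ℂ) : ℂ :=
  ∫ φ in Ioo 0 (π / 2), (Real.sin φ : ℂ) ^ (2 * a - 1) * Real.sin (K * φ)

theorem sineMoment_one {a : ℂ} (ha : 0 < a.re) :
    sineMoment 1 a = √π / 2 * (Complex.Gamma (1 / 2 + a) / Complex.Gamma (1 + a)) := by
  have hbeta := integral_sin_cpow_mul_cos_cpow (a + 1 / 2) (1 / 2)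
  have hsin : EqOn (fun φ => (Real.sin φ : ℂ) ^ (2 * (a + 1 / 2) - 1) *
      (Real.cos φ : ℂ) ^ (2 * (1 / 2 : ℂ) - 1))
      (fun φ => (Real.sin φ : ℂ) ^ (2 * a - 1) * Real.sin (1 * φ)) (Ioo 0 (π / 2)) := fun φ hφ => by
    have hne : (Real.sin φ : ℂ) ≠ 0 := Complex.ofReal_ne_zero.mpr (sin_pos_of_mem_Ioo hφ).ne'
    beta_reduce
    rw [show 2 * (a + 1 / 2) - 1 = 2 * a - 1 + 1 by ring, Complex.cpow_add _ _ hne,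
      show 2 * (1 / 2 : ℂ) - 1 = 0 by ring, Complex.cpow_zero, Complex.cpow_one, mul_one, one_mul]
  have hhalf : Complex.Gamma (1 / 2) = √π := by
    rw [Complex.Gamma_one_half_eq, Real.sqrt_eq_rpow, Complex.ofReal_cpow Real.pi_pos.le]; simp
  rw [setIntegral_congr_fun measurableSet_Ioo hsin,
    Complex.betaIntegral_eq_Gamma_mul_div _ _ (by simp; linarith) (by simp), hhalf,
    show a + 1 / 2 + 1 / 2 = 1 + a by ring, add_comm a] at hbeta
  rw [sineMoment, hbeta]
  ring

theorem hasDerivAt_sin_cpow_mul_sin (κ : ℝ) (a : ℂ) {φ : ℝ} (hφ : 0 < Real.sin φ) :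
    HasDerivAt (fun φ : ℝ => (Real.sin φ : ℂ) ^ (2 * a) * Real.sin (2 * κ * φ))
      ((κ + a) * ((Real.sin φ : ℂ) ^ (2 * a - 1) * Real.sin ((2 * κ + 1) * φ)) -
        (κ - a) * ((Real.sin φ : ℂ) ^ (2 * a - 1) * Real.sin ((2 * κ - 1) * φ))) φ := by
  have hne : (Real.sin φ : ℂ) ≠ 0 := Complex.ofReal_ne_zero.mpr hφ.ne'
  have hcpow : HasDerivAt (fun φ : ℝ => (Real.sin φ : ℂ) ^ (2 * a))
      (2 * a * (Real.sin φ : ℂ) ^ (2 * a - 1) * Real.cos φ) φ :=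
    HasDerivAt.comp (h₂ := fun w : ℂ => w ^ (2 * a)) φ (Complex.hasStrictDerivAt_cpow_const
      (Complex.ofReal_mem_slitPlane.mpr hφ)).hasDerivAt (Real.hasDerivAt_sin φ).ofReal_comp
  have hsin : HasDerivAt (fun φ : ℝ => (Real.sin (2 * κ * φ) : ℂ))
      ((Real.cos (2 * κ * φ) * (2 * κ) : ℝ) : ℂ) φ := by
    simpa using ((hasDerivAt_id φ).const_mul (2 * κ)).sin.ofReal_comp
  refine (hcpow.mul hsin).congr_deriv ?_
  rw [show (2 * κ + 1) * φ = 2 * κ * φ + φ by ring, show (2 * κ - 1) * φ = 2 * κ * φ - φ by ring,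
    Real.sin_add, Real.sin_sub]
  have hpow : (Real.sin φ : ℂ) ^ (2 * a) = (Real.sin φ : ℂ) ^ (2 * a - 1) * Real.sin φ := by
    rw [Complex.cpow_sub _ _ hne, Complex.cpow_one, div_mul_cancel₀ _ hne]
  rw [hpow]
  push_cast
  ring

theorem sineMoment_recurrence {a : ℂ} (ha : 0 < a.re) (k : ℕ) :
    (k + a) * sineMoment (2 * k + 1) a = (k - a) * sineMoment (2 * k - 1) a := by
  have hint (K : ℝ) := integrableOn_sin_cpow_mul (g := fun φ => Real.sin (K * φ)) (by fun_prop)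
    (fun _ => Real.abs_sin_le_one _) ha
  have hdiff := ((hint (2 * k + 1)).const_mul (k + a)).sub ((hint (2 * k - 1)).const_mul (k - a))
  have hcont : Continuous fun φ : ℝ => (Real.sin φ : ℂ) ^ (2 * a) * Real.sin (2 * k * φ) := by
    refine Continuous.mul (continuous_iff_continuousAt.mpr fun φ => ?_) (by fun_prop)
    exact (Complex.continuousAt_ofReal_cpow_const _ _ (Or.inl (by simpa))).comp
      Real.continuous_sin.continuousAt
  have hend : Real.sin (2 * k * (π / 2)) = 0 := by
    rw [show 2 * (k : ℝ) * (π / 2) = k * π by ring, Real.sin_nat_mul_pi]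
  have hftc := intervalIntegral.integral_eq_sub_of_hasDerivAt_of_le (b := π / 2) (by positivity)
    hcont.continuousOn (fun φ hφ => hasDerivAt_sin_cpow_mul_sin k a (sin_pos_of_mem_Ioo hφ))
    ((intervalIntegrable_iff_integrableOn_Ioo_of_le (by positivity)).mpr hdiff)
  rw [intervalIntegral.integral_of_le (by positivity), integral_Ioc_eq_integral_Ioo,
    integral_sub ((hint _).const_mul _) ((hint _).const_mul _), integral_const_mul,
    integral_const_mul, hend] at hftc
  exact sub_eq_zero.mp (by simpa [sineMoment] using hftc)

theorem sineMoment_two_mul_sub_one {a : ℂ} (ha : 0 < a.re) (ha1 : a.re < 1) {k : ℕ} (hk : 1 ≤ k) :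
    sineMoment (2 * k - 1) a = √π / 2 * (Complex.Gamma (1 / 2 + a) / Complex.Gamma (1 - a)) *
      (Complex.Gamma (k - a) / Complex.Gamma (k + a)) := by
  have hΓ : Complex.Gamma (1 - a) ≠ 0 := Complex.Gamma_ne_zero_of_re_pos (by simpa)
  induction k, hk using Nat.le_induction with
  | base =>
    norm_num [sineMoment_one ha]
    field_simp
  | succ k hk ih =>
    have hk' : (1 : ℝ) ≤ k := by exact_mod_cast hk
    have hadd : (k + a : ℂ) ≠ 0 := ne_of_apply_ne Complex.re (by simp; linarith)
    have hsub : (k - a : ℂ) ≠ 0 := ne_of_apply_ne Complex.re (by simp; linarith)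
    have hstep := sineMoment_recurrence ha k
    rw [ih] at hstep
    rw [show (2 * ((k + 1 : ℕ) : ℝ) - 1) = 2 * k + 1 by push_cast; ring,
      show ((k + 1 : ℕ) : ℂ) - a = k - a + 1 by push_cast; ring,
      show ((k + 1 : ℕ) : ℂ) + a = k + a + 1 by push_cast; ring,
      Complex.Gamma_add_one _ hadd, Complex.Gamma_add_one _ hsub]
    apply mul_left_cancel₀ hadd
    rw [hstep]
    field_simp

theorem gammaKernel_eq_mul_sineMoment (t : ℝ) {a : ℂ} (ha : 0 < a.re) (ha1 : a.re < 1) {k : ℕ}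
    (hk : 1 ≤ k) :
    √π * gammaKernel k k t a = 2 * gammaKernel 1 (1 / 2) t a * sineMoment (2 * k - 1) a := by
  have hone : Complex.Gamma (1 - a) ≠ 0 := Complex.Gamma_ne_zero_of_re_pos (by simpa)
  have hhalf : Complex.Gamma (1 / 2 + a) ≠ 0 :=
    Complex.Gamma_ne_zero_of_re_pos (by simp; linarith)
  rw [sineMoment_two_mul_sub_one ha ha1 hk, gammaKernel, gammaKernel]
  push_cast
  generalize Complex.Gamma (1 / 2 + a) = G at hhalf ⊢
  field_simp

end SineMoment

section Oscillatory

/-- The oscillatory integral representing `sinh (π t)` times the Mellin–Barnes integral, up to an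
explicit factor, when `K = 2k - 1` and `q = √z`. -/
noncomputable def oscIntegral (K t q : ℝ) : ℝ :=
  ∫ φ in 0..π / 2, Real.sin (2 * t * Real.arsinh (q * Real.sin φ)) * Real.sin (K * φ) /
    √(1 + (q * Real.sin φ) ^ 2)

theorem oscIntegral_eq_setIntegral (K t q : ℝ) :
    (oscIntegral K t q : ℂ) =
      ∫ φ in Ioo 0 (π / 2), Real.sin (K * φ) * sinArsinh t (q * Real.sin φ) := by
  rw [oscIntegral, intervalIntegral.integral_of_le (by positivity), integral_Ioc_eq_integral_Ioo,
    ← integral_complex_ofReal]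
  congr with φ
  rw [sinArsinh, ← Complex.ofReal_mul, mul_div_assoc', mul_comm]

variable {α q : ℝ} (K t : ℝ)

theorem integrable_gammaKernel_mul_sin_cpow (hα : 1 / 4 < α) (hα1 : α < 1) (hq : 0 < q) :
    Integrable (fun p : ℝ × ℝ => gammaKernel 1 (1 / 2) t (α + p.1 * I) *
      (((q * Real.sin p.2 : ℝ) : ℂ) ^ (2 * ((α : ℂ) + p.1 * I) - 1) * Real.sin (K * p.2)))
      (volume.prod (volume.restrict (Ioo 0 (π / 2)))) := by
  have hα0 : 0 < α := by linarith
  have hpq : 1 - α < 1 / 2 + α := by linarith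
  refine ((integrable_gammaKernel_vertical t hα0 hα1 hpq).norm.mul_prod
    ((integrableOn_sin_rpow (p := 2 * α - 1) (by linarith)).const_mul (q ^ (2 * α - 1)))).mono'
    (Measurable.aestronglyMeasurable ?_) ?_
  · have hkernel := (continuous_gammaKernel_vertical t hα0 hα1 hpq).measurable
    exact (hkernel.comp measurable_fst).mul (Measurable.mul (.pow (by fun_prop) (by fun_prop))
      (by fun_prop))
  · rw [← Measure.restrict_univ (μ := (volume : Measure ℝ)), Measure.prod_restrict,
      Measure.restrict_univ]
    refine ae_restrict_of_forall_mem (MeasurableSet.univ.prod measurableSet_Ioo) ?_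
    rintro ⟨τ, φ⟩ ⟨-, hφ⟩
    have hsin : 0 < Real.sin φ := sin_pos_of_mem_Ioo hφ
    have hre : (2 * ((α : ℂ) + τ * I) - 1).re = 2 * α - 1 := by simp
    rw [norm_mul, norm_mul, Complex.norm_cpow_eq_rpow_re_of_pos (mul_pos hq hsin),
      Complex.norm_real, hre, Real.mul_rpow hq.le hsin.le]
    exact mul_le_mul_of_nonneg_left
      (mul_le_of_le_one_right (by positivity) (Real.abs_sin_le_one _)) (norm_nonneg _)

theorem integral_cpow_mul_gammaKernel_mul_sineMoment_eq (hα : 1 / 4 < α) (hα' : α < 1 / 2)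
    (hq : 0 < q) :
    Real.sinh (π * t) * ∫ τ : ℝ, (q : ℂ) ^ (2 * ((α : ℂ) + τ * I) - 1) *
      (gammaKernel 1 (1 / 2) t (α + τ * I) * sineMoment K (α + τ * I)) =
      2 * √π * π * oscIntegral K t q := by
  have hfactor (τ : ℝ) : (q : ℂ) ^ (2 * ((α : ℂ) + τ * I) - 1) *
      (gammaKernel 1 (1 / 2) t (α + τ * I) * sineMoment K (α + τ * I)) =
      ∫ φ in Ioo 0 (π / 2), gammaKernel 1 (1 / 2) t (α + τ * I) *
        (((q * Real.sin φ : ℝ) : ℂ) ^ (2 * ((α : ℂ) + τ * I) - 1) * Real.sin (K * φ)) := by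
    rw [integral_const_mul, mul_left_comm, sineMoment, ← integral_const_mul]
    congr 1
    refine setIntegral_congr_fun measurableSet_Ioo fun φ hφ => ?_
    rw [Complex.ofReal_mul, Complex.mul_cpow_ofReal_nonneg hq.le (sin_pos_of_mem_Ioo hφ).le,
      mul_assoc]
  have hinner (φ : ℝ) (hφ : φ ∈ Ioo 0 (π / 2)) :
      (Real.sinh (π * t) : ℂ) * ∫ τ : ℝ, gammaKernel 1 (1 / 2) t (α + τ * I) *
        (((q * Real.sin φ : ℝ) : ℂ) ^ (2 * ((α : ℂ) + τ * I) - 1) * Real.sin (K * φ)) =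
      2 * √π * π * (Real.sin (K * φ) * sinArsinh t (q * Real.sin φ)) := by
    simp only [← mul_assoc (gammaKernel 1 (1 / 2) t _), integral_mul_const]
    simp only [mul_comm (gammaKernel 1 (1 / 2) t _)]
    linear_combination (Real.sin (K * φ) : ℂ) *
      integral_cpow_mul_gammaKernel_eq t hα hα' (mul_pos hq (sin_pos_of_mem_Ioo hφ))
  simp only [hfactor]
  rw [integral_integral_swap (integrable_gammaKernel_mul_sin_cpow K t hα (by linarith) hq),
    ← integral_const_mul, setIntegral_congr_fun measurableSet_Ioo hinner, integral_const_mul,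
    oscIntegral_eq_setIntegral]

theorem cpow_sub_natCast_eq {z : ℝ} (hz : 0 < z) (a : ℂ) (k : ℕ) :
    (z : ℂ) ^ (a - k) = (z ^ (-k : ℝ) * √z : ℝ) * (√z : ℂ) ^ (2 * a - 1) := by
  have hz0 : (z : ℂ) ≠ 0 := Complex.ofReal_ne_zero.mpr hz.ne'
  have hsq : (√z : ℂ) ^ 2 = z := by exact_mod_cast Real.sq_sqrt hz.le
  rw [← sq_cpow_sub_one_mul_self (Real.sqrt_pos.mpr hz), hsq, Complex.ofReal_mul,
    Complex.ofReal_cpow hz.le, Complex.cpow_sub _ _ hz0, Complex.cpow_sub _ _ hz0, Complex.cpow_one,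
    Complex.ofReal_neg, Complex.cpow_neg, Complex.ofReal_natCast]
  field_simp
  linear_combination -(z : ℂ) ^ a * hsq

theorem sinh_mul_integral_mbIntegrand_eq {k : ℕ} {z : ℝ} (hz : 0 < z) (hα : 0 < α) (hαk : α < k) :
    Real.sinh (π * t) * ∫ τ, mbIntegrand k t (α - k) z τ =
      (4 * π * (z ^ (-k : ℝ) * √z) * oscIntegral (2 * k - 1) t √z : ℝ) := by
  have hk : 1 ≤ k := Nat.cast_pos.mp (hα.trans hαk)
  have hk' : (1 : ℝ) ≤ k := by exact_mod_cast hk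
  have hmoment (τ : ℝ) : mbIntegrand k t ((3 / 8 : ℝ) - k) z τ =
      2 / √π * (z ^ (-k : ℝ) * √z : ℝ) * ((√z : ℂ) ^ (2 * (((3 / 8 : ℝ) : ℂ) + τ * I) - 1) *
        (gammaKernel 1 (1 / 2) t ((3 / 8 : ℝ) + τ * I) *
          sineMoment (2 * k - 1) ((3 / 8 : ℝ) + τ * I))) := by
    have hkernel := gammaKernel_eq_mul_sineMoment t (a := (3 / 8 : ℝ) + τ * I) (by simp)
      (by simp; norm_num) hk
    have hπ := sqrt_pi_ne_zero
    rw [mbIntegrand_sub_eq t k _ hz τ, cpow_sub_natCast_eq hz]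
    apply mul_left_cancel₀ hπ
    rw [← mul_assoc, hkernel]
    field_simp
  have hswap := integral_cpow_mul_gammaKernel_mul_sineMoment_eq (2 * k - 1) t (α := 3 / 8)
    (by norm_num) (by norm_num) (Real.sqrt_pos.mpr hz)
  have hπ := sqrt_pi_ne_zero
  rw [integral_mbIntegrand_eq t hz hα hαk (by norm_num : (0 : ℝ) < 3 / 8) (by linarith)]
  simp only [hmoment]
  rw [integral_const_mul, mul_left_comm, hswap]
  push_cast
  field_simp
  ring

end Oscillatory

section FirstDerivativeTest

theorem abs_cos_div_sub_deriv_le {s c D E b l : ℝ} (hs : |s| ≤ 1) (hc : |c| ≤ 1) (hb : 0 < b)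
    (hl : 0 < l) :
    |c / b - (c * (D / b) * (D / (D ^ 2 + l ^ 2)) +
        s * ((E * (D ^ 2 + l ^ 2) - D * (2 * D * E)) / (D ^ 2 + l ^ 2) ^ 2))| ≤
      |E| / (D ^ 2 + l ^ 2) + l ^ 2 / (b * (D ^ 2 + l ^ 2)) := by
  have hden : 0 < D ^ 2 + l ^ 2 := by positivity
  have hratio : |(D ^ 2 - l ^ 2) / (D ^ 2 + l ^ 2)| ≤ 1 := by
    rw [abs_div, abs_of_pos hden, div_le_one hden, abs_le]
    constructor <;> nlinarith
  calc _ = |s * ((D ^ 2 - l ^ 2) / (D ^ 2 + l ^ 2)) * (E / (D ^ 2 + l ^ 2)) +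
          c * (l ^ 2 / (b * (D ^ 2 + l ^ 2)))| := by
        congr 1; field_simp; ring
    _ ≤ |s| * |(D ^ 2 - l ^ 2) / (D ^ 2 + l ^ 2)| * (|E| / (D ^ 2 + l ^ 2)) +
          |c| * (l ^ 2 / (b * (D ^ 2 + l ^ 2))) := by
        refine (abs_add_le _ _).trans_eq ?_
        rw [abs_mul, abs_mul, abs_mul, abs_div E, abs_of_pos hden,
          abs_of_pos (show 0 < l ^ 2 / (b * (D ^ 2 + l ^ 2)) by positivity)]
    _ ≤ |E| / (D ^ 2 + l ^ 2) + l ^ 2 / (b * (D ^ 2 + l ^ 2)) := by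
        gcongr
        · exact mul_le_of_le_one_left (by positivity) (mul_le_one₀ hs (abs_nonneg _) hratio)
        · exact mul_le_of_le_one_left (by positivity) hc

theorem abs_sin_mul_div_le {l : ℝ} (hl : 0 < l) (x D : ℝ) :
    |Real.sin x * (D / (D ^ 2 + l ^ 2))| ≤ 1 / (2 * l) := by
  have hquot : |D / (D ^ 2 + l ^ 2)| ≤ 1 / (2 * l) := by
    have hden : 0 < D ^ 2 + l ^ 2 := by positivity
    rw [abs_div, abs_of_pos hden, div_le_div_iff₀ hden (by positivity)]
    nlinarith [sq_nonneg (|D| - l), sq_abs D]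
  rw [abs_mul, ← one_mul (1 / (2 * l))]
  exact mul_le_mul (Real.abs_sin_le_one x) hquot (abs_nonneg _) zero_le_one

/- Integrating by parts against `D / (D ^ 2 + l ^ 2)` instead of `1 / D` gives a first-derivative
test that survives the zeros of the phase derivative `D / b`. -/
theorem abs_integral_cos_div_le {P D E b W w : ℝ → ℝ} {l x y : ℝ} (hxy : x ≤ y) (hl : 0 < l)
    (hb : ∀ φ, 0 < b φ) (hbc : Continuous b) (hP : ∀ φ, HasDerivAt P (D φ / b φ) φ)
    (hD : ∀ φ, HasDerivAt D (E φ) φ) (hW : ∀ φ, HasDerivAt W (w φ) φ)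
    (hw : ∀ φ ∈ Icc x y,
      |E φ| / (D φ ^ 2 + l ^ 2) + l ^ 2 / (b φ * (D φ ^ 2 + l ^ 2)) ≤ w φ) :
    |∫ φ in x..y, Real.cos (P φ) / b φ| ≤ 1 / l + (W y - W x) := by
  have hPc : Continuous P := continuous_iff_continuousAt.mpr fun φ => (hP φ).continuousAt
  have hg : Continuous fun φ => Real.cos (P φ) / b φ :=
    (Real.continuous_cos.comp hPc).div hbc fun φ => (hb φ).ne'
  set R : ℝ → ℝ := fun φ => Real.sin (P φ) * (D φ / (D φ ^ 2 + l ^ 2)) with hR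
  have hden (φ : ℝ) : HasDerivAt (fun φ => D φ ^ 2 + l ^ 2) (2 * D φ * E φ) φ := by
    simpa using ((hD φ).fun_pow 2).add_const (l ^ 2)
  have hderiv (φ : ℝ) := (hg.integral_hasStrictDerivAt x φ).hasDerivAt.sub
    ((hP φ).sin.mul ((hD φ).fun_div (hden φ) (by positivity)))
  have hbound := image_norm_le_of_norm_deriv_right_le_deriv_boundary
    (fun φ _ => (hderiv φ).continuousAt.continuousWithinAt)
    (fun φ _ => (hderiv φ).hasDerivWithinAt) (B := fun φ => W φ - W x + |R x|) (b := y)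
    (by simp [hR, abs_mul, abs_div]) (fun φ => ((hW φ).sub_const _).add_const _)
    (fun φ hφ => (abs_cos_div_sub_deriv_le (Real.abs_sin_le_one _) (Real.abs_cos_le_one _) (hb φ)
      hl).trans (hw φ (Ico_subset_Icc_self hφ)))
    (right_mem_Icc.mpr hxy)
  have hRx : |R x| ≤ 1 / (2 * l) := abs_sin_mul_div_le hl _ _
  have hRy : |R y| ≤ 1 / (2 * l) := abs_sin_mul_div_le hl _ _
  have htri := abs_sub_abs_le_abs_sub (∫ φ in x..y, Real.cos (P φ) / b φ) (R y)
  have hhalf : 1 / l = 1 / (2 * l) + 1 / (2 * l) := by field_simp; norm_num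
  change |(∫ φ in x..y, Real.cos (P φ) / b φ) - R y| ≤ W y - W x + |R x| at hbound
  linarith

theorem hasDerivAt_arctan_div {D : ℝ → ℝ} {E l φ : ℝ} (hD : HasDerivAt D E φ) (hl : l ≠ 0) :
    HasDerivAt (fun φ => Real.arctan (D φ / l) / l) (E / (D φ ^ 2 + l ^ 2)) φ := by
  refine ((hD.div_const l).arctan.div_const l).congr_deriv ?_
  have hden : D φ ^ 2 + l ^ 2 ≠ 0 := by positivity
  have hscale : 1 + (D φ / l) ^ 2 = (D φ ^ 2 + l ^ 2) / l ^ 2 := by field_simp; ring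
  rw [hscale]
  field_simp

theorem hasDerivAt_arsinh_mul {m : ℝ} (hm : m ≠ 0) (φ : ℝ) :
    HasDerivAt (fun φ => Real.arsinh (m * φ) / m) (1 / √(1 + (m * φ) ^ 2)) φ := by
  refine (((hasDerivAt_id φ).const_mul m).arsinh.div_const m).congr_deriv ?_
  rw [id, smul_eq_mul, mul_one, mul_div_cancel_right₀ _ hm, one_div]

theorem hasDerivAt_arctan_mul {m : ℝ} (hm : m ≠ 0) (φ : ℝ) :
    HasDerivAt (fun φ => Real.arctan (m * φ) / m) (1 / (1 + (m * φ) ^ 2)) φ := by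
  refine (((hasDerivAt_id φ).const_mul m).arctan.div_const m).congr_deriv ?_
  rw [id, mul_one, mul_div_cancel_right₀ _ hm]

theorem abs_arctan_div_sub_le {l : ℝ} (hl : 0 < l) (x y : ℝ) :
    |Real.arctan x / l - Real.arctan y / l| ≤ π / l := by
  rw [← sub_div, abs_div, abs_of_pos hl]
  gcongr
  rw [abs_le]
  constructor <;> linarith [Real.arctan_lt_pi_div_two x, Real.neg_pi_div_two_lt_arctan x,
    Real.arctan_lt_pi_div_two y, Real.neg_pi_div_two_lt_arctan y]

end FirstDerivativeTest

section PhaseGeometry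

variable {q t K s c b : ℝ}

theorem sq_mul_le_of_half_le (hq : 0 < q) (ht : 0 < t) (hs : 1 / 2 ≤ s) (hqs : q * s ≤ b) :
    q ^ 2 * t ≤ 6 * t * q * s * b := by
  have hqb : q * (1 / 2) ≤ b := (mul_le_mul_of_nonneg_left hs hq.le).trans hqs
  have hprod : t * q * (1 / 2 * (q * (1 / 2))) ≤ t * q * (s * b) := by gcongr
  nlinarith [show 0 < q ^ 2 * t by positivity]

theorem sq_mul_le_of_le_half_mul (ht : 0 < t) (hq : 0 < q) (hc : 17 / 20 ≤ c)
    (hK : K ≤ t * q / 2) (hKs : K * s ≤ t / 2) (hK0 : 0 ≤ K) (hb : b ≤ 1 + q * s) :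
    q ^ 2 * t ≤ (2 * t * q * c - K * b) ^ 2 * (3 / t) := by
  have hKb : K * b ≤ t * q := calc
    K * b ≤ K * (1 + q * s) := by gcongr
    _ = K + q * (K * s) := by ring
    _ ≤ t * q / 2 + q * (t / 2) := by gcongr
    _ = t * q := by ring
  have htqc : t * q * (17 / 20) ≤ t * q * c := by gcongr
  calc q ^ 2 * t ≤ (t * q * (7 / 10)) ^ 2 * (3 / t) := by
        field_simp; norm_num
    _ ≤ (2 * t * q * c - K * b) ^ 2 * (3 / t) := by
        gcongr; linarith

theorem sq_mul_le_of_half_mul_lt (ht : 0 < t) (hq : 0 < q) (hb : 0 < b) (hs : 0 ≤ s)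
    (hb2 : b ^ 2 = 1 + (q * s) ^ 2) (hK : t * q / 2 < K) (hKs : K * s ≤ t / 2) :
    q ^ 2 * t ≤ q ^ 2 * t * (3 * (K / (t * q)) / b) := by
  have hqs : q * s ≤ 1 := by
    have hscale : t * q / 2 * (q * s) ≤ t * q / 2 := calc
      t * q / 2 * (q * s) ≤ K * (q * s) := by gcongr
      _ = q * (K * s) := by ring
      _ ≤ q * (t / 2) := by gcongr
      _ = t * q / 2 := by ring
    exact le_of_mul_le_mul_left (by rwa [mul_one]) (by positivity : 0 < t * q / 2)
  have hb' : b ≤ 3 / 2 := by nlinarith [pow_le_one₀ (n := 2) (by positivity : 0 ≤ q * s) hqs]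
  refine le_mul_of_one_le_right (by positivity) ?_
  rw [← mul_div_assoc, div_div, one_le_div (by positivity)]
  nlinarith [mul_pos ht hq]

/- Where `s` is not small the curvature term is large; where it is small, either `K s`, and with it
the curvature term, is still large, or the phase derivative `2 t q c - K b` is of size `t q`, or `K`
is at least of size `t q` and the last term wins. -/
theorem sq_mul_le_curvature_add (hq : 0 < q) (ht : 0 < t) (hK : 0 ≤ K) (hs : 0 ≤ s) (hc : 0 ≤ c)
    (hsc : s ^ 2 + c ^ 2 = 1) (hb : 0 < b) (hb2 : b ^ 2 = 1 + (q * s) ^ 2) :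
    q ^ 2 * t ≤ 3 * (2 * t * q * s + K * (q ^ 2 * s * c / b)) * b +
      ((2 * t * q * c - K * b) ^ 2 + q ^ 2 * t) * (3 / t + 3 * (K / (t * q)) / b) := by
  have hqs : 0 ≤ q * s := by positivity
  have hqb : q * s ≤ b := le_of_sq_le_sq (by linarith) hb.le
  have hb1 : b ≤ 1 + q * s := le_of_sq_le_sq (by nlinarith) (by positivity)
  set N := 2 * t * q * c - K * b
  have hexpand : 3 * (2 * t * q * s + K * (q ^ 2 * s * c / b)) * b +
      (N ^ 2 + q ^ 2 * t) * (3 / t + 3 * (K / (t * q)) / b) =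
      6 * t * q * s * b + 3 * q ^ 2 * (K * s) * c + N ^ 2 * (3 / t) +
        q ^ 2 * t * (3 * (K / (t * q)) / b) + (q ^ 2 * t * (3 / t) +
        N ^ 2 * (3 * (K / (t * q)) / b)) := by
    field_simp; ring
  rw [hexpand]
  have hslope : 0 ≤ 6 * t * q * s * b := by positivity
  have hcurv : 0 ≤ 3 * q ^ 2 * (K * s) * c := by positivity
  have hder : 0 ≤ N ^ 2 * (3 / t) := by positivity
  have hfreq : 0 ≤ q ^ 2 * t * (3 * (K / (t * q)) / b) := by positivity
  have hrest : 0 ≤ q ^ 2 * t * (3 / t) + N ^ 2 * (3 * (K / (t * q)) / b) := by positivity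
  rcases le_or_gt (1 / 2) s with hs' | hs'
  · linarith [sq_mul_le_of_half_le hq ht hs' hqb]
  have hc' : 17 / 20 ≤ c := le_of_sq_le_sq (by nlinarith) hc
  rcases le_or_gt (t / 2) (K * s) with hKs | hKs
  · have hlarge : q ^ 2 * (t / 2 * (17 / 20)) ≤ q ^ 2 * (K * s * c) := by gcongr
    linarith [show 0 < q ^ 2 * t by positivity]
  · rcases le_or_gt K (t * q / 2) with hK' | hK'
    · linarith [sq_mul_le_of_le_half_mul ht hq hc' hK' hKs.le hK hb1]
    · linarith [sq_mul_le_of_half_mul_lt ht hq hb hs hb2 hK' hKs.le]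

end PhaseGeometry

section Phase

variable {q t K φ : ℝ}

/-- The elliptic-type modulus `Δ` in the denominator of the oscillatory integral. -/
noncomputable def legendreDelta (q φ : ℝ) : ℝ := √(1 + (q * Real.sin φ) ^ 2)

/-- The phases of the oscillatory integral: those with `κ = ± K` arise from the product of the
two sines. -/
noncomputable def oscPhase (q t κ φ : ℝ) : ℝ := 2 * t * Real.arsinh (q * Real.sin φ) + κ * φ

/-- The derivative of `oscPhase`, multiplied by `legendreDelta`. -/
noncomputable def phaseNum (q t κ φ : ℝ) : ℝ :=
  2 * t * q * Real.cos φ + κ * legendreDelta q φ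

/-- The derivative of `phaseNum`. -/
noncomputable def phaseNumDeriv (q t κ φ : ℝ) : ℝ :=
  -(2 * t * q * Real.sin φ) + κ * (q ^ 2 * Real.sin φ * Real.cos φ / legendreDelta q φ)

theorem legendreDelta_pos (q φ : ℝ) : 0 < legendreDelta q φ := Real.sqrt_pos.mpr (by positivity)

theorem legendreDelta_sq (q φ : ℝ) : legendreDelta q φ ^ 2 = 1 + (q * Real.sin φ) ^ 2 :=
  Real.sq_sqrt (by positivity)

theorem continuous_legendreDelta (q : ℝ) : Continuous (legendreDelta q) := by
  unfold legendreDelta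
  fun_prop

theorem hasDerivAt_legendreDelta (q φ : ℝ) : HasDerivAt (legendreDelta q)
    (q ^ 2 * Real.sin φ * Real.cos φ / legendreDelta q φ) φ := by
  refine (((((Real.hasDerivAt_sin φ).const_mul q).fun_pow 2).const_add 1).sqrt
    (by positivity)).congr_deriv ?_
  rw [← legendreDelta, div_eq_div_iff (by positivity [legendreDelta_pos q φ])
    (legendreDelta_pos q φ).ne']
  push_cast
  ring

theorem hasDerivAt_oscPhase (q t κ φ : ℝ) :
    HasDerivAt (oscPhase q t κ) (phaseNum q t κ φ / legendreDelta q φ) φ := by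
  refine ((((Real.hasDerivAt_sin φ).const_mul q).arsinh.const_mul (2 * t)).add
    ((hasDerivAt_id φ).const_mul κ)).congr_deriv ?_
  have hΔ := legendreDelta_pos q φ
  rw [← legendreDelta, phaseNum, smul_eq_mul]
  field_simp

theorem hasDerivAt_phaseNum (q t κ φ : ℝ) :
    HasDerivAt (phaseNum q t κ) (phaseNumDeriv q t κ φ) φ := by
  refine (((Real.hasDerivAt_cos φ).const_mul (2 * t * q)).add
    ((hasDerivAt_legendreDelta q φ).const_mul κ)).congr_deriv ?_
  rw [phaseNumDeriv, mul_neg]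

theorem continuous_cos_oscPhase_div (q t κ : ℝ) :
    Continuous fun φ => Real.cos (oscPhase q t κ φ) / legendreDelta q φ :=
  (Real.continuous_cos.comp (continuous_iff_continuousAt.mpr fun φ =>
    (hasDerivAt_oscPhase q t κ φ).continuousAt)).div (continuous_legendreDelta q)
    fun φ => (legendreDelta_pos q φ).ne'

theorem sqrt_one_add_sq_le_legendreDelta (hq : 0 ≤ q) (hφ : φ ∈ Icc 0 (π / 2)) :
    √(1 + (2 * q / π * φ) ^ 2) ≤ legendreDelta q φ := by
  have hφ0 := hφ.1
  have hchord : 2 * q / π * φ ≤ q * Real.sin φ := calc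
    2 * q / π * φ = q * (2 / π * φ) := by ring
    _ ≤ q * Real.sin φ := by gcongr; exact Real.mul_le_sin hφ.1 hφ.2
  unfold legendreDelta
  gcongr

theorem sq_div_le_phaseNumDeriv_add (hq : 0 < q) (ht : 0 < t) (hK : 0 ≤ K)
    (hφ : φ ∈ Icc 0 (π / 2)) :
    q ^ 2 * t / (legendreDelta q φ * (phaseNum q t (-K) φ ^ 2 + q ^ 2 * t)) ≤
      -3 * (phaseNumDeriv q t (-K) φ / (phaseNum q t (-K) φ ^ 2 + q ^ 2 * t)) +
        3 / t * (1 / √(1 + (2 * q / π * φ) ^ 2)) +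
        3 * (K / (t * q)) * (1 / (1 + (2 * q / π * φ) ^ 2)) := by
  have hsin := Real.sin_nonneg_of_nonneg_of_le_pi hφ.1 (by linarith [hφ.2, Real.pi_pos])
  have hcos := Real.cos_nonneg_of_neg_pi_div_two_le_of_le (by linarith [hφ.1, Real.pi_pos]) hφ.2
  have hΔ := legendreDelta_pos q φ
  have hsqrt := sqrt_one_add_sq_le_legendreDelta hq.le hφ
  have hcore := sq_mul_le_curvature_add hq ht hK hsin hcos (Real.sin_sq_add_cos_sq φ) hΔ
    (legendreDelta_sq q φ)
  rw [← neg_add_eq_sub, ← neg_mul, add_comm (-K * _), ← phaseNum] at hcore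
  have hderiv : 2 * t * q * Real.sin φ +
      K * (q ^ 2 * Real.sin φ * Real.cos φ / legendreDelta q φ) = -phaseNumDeriv q t (-K) φ := by
    rw [phaseNumDeriv]; ring
  rw [hderiv] at hcore
  have hden : 0 < phaseNum q t (-K) φ ^ 2 + q ^ 2 * t := by positivity
  set N := phaseNum q t (-K) φ ^ 2 + q ^ 2 * t
  calc q ^ 2 * t / (legendreDelta q φ * N)
      ≤ (3 * -phaseNumDeriv q t (-K) φ * legendreDelta q φ +
          N * (3 / t + 3 * (K / (t * q)) / legendreDelta q φ)) / (legendreDelta q φ * N) := by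
        gcongr
    _ = -3 * (phaseNumDeriv q t (-K) φ / N) + 3 / t * (1 / legendreDelta q φ) +
          3 * (K / (t * q)) * (1 / legendreDelta q φ ^ 2) := by
        field_simp; ring
    _ ≤ -3 * (phaseNumDeriv q t (-K) φ / N) + 3 / t * (1 / √(1 + (2 * q / π * φ) ^ 2)) +
          3 * (K / (t * q)) * (1 / (√(1 + (2 * q / π * φ) ^ 2)) ^ 2) := by
        gcongr
    _ = _ := by rw [Real.sq_sqrt (by positivity)]

theorem abs_phaseNumDeriv_neg (hq : 0 ≤ q) (ht : 0 ≤ t) (hK : 0 ≤ K) (hφ : φ ∈ Icc 0 (π / 2)) :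
    |phaseNumDeriv q t (-K) φ| = -phaseNumDeriv q t (-K) φ := by
  have hsin := Real.sin_nonneg_of_nonneg_of_le_pi hφ.1 (by linarith [hφ.2, Real.pi_pos])
  have hcos := Real.cos_nonneg_of_neg_pi_div_two_le_of_le (by linarith [hφ.1, Real.pi_pos]) hφ.2
  have hΔ := legendreDelta_pos q φ
  refine abs_of_nonpos ?_
  rw [phaseNumDeriv, neg_mul, ← neg_add, neg_nonpos]
  positivity

theorem abs_phaseNumDeriv_le (hq : 0 ≤ q) (ht : 0 ≤ t) (hK : 0 ≤ K) (hφ : φ ∈ Icc 0 (π / 2)) :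
    |phaseNumDeriv q t K φ| ≤ phaseNumDeriv q t K φ - 2 * phaseNumDeriv q t 0 φ := by
  have hsin := Real.sin_nonneg_of_nonneg_of_le_pi hφ.1 (by linarith [hφ.2, Real.pi_pos])
  have hcos := Real.cos_nonneg_of_neg_pi_div_two_le_of_le (by linarith [hφ.1, Real.pi_pos]) hφ.2
  have hΔ := legendreDelta_pos q φ
  have hslope : 0 ≤ 2 * t * q * Real.sin φ := by positivity
  have hcurv : 0 ≤ K * (q ^ 2 * Real.sin φ * Real.cos φ / legendreDelta q φ) := by positivity
  simp only [phaseNumDeriv, zero_mul, add_zero]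
  rw [abs_le]
  constructor <;> linarith

theorem sq_phaseNum_zero_le (hq : 0 ≤ q) (ht : 0 ≤ t) (hK : 0 ≤ K) (hφ : φ ∈ Icc 0 (π / 2)) :
    phaseNum q t 0 φ ^ 2 ≤ phaseNum q t K φ ^ 2 := by
  have hcos := Real.cos_nonneg_of_neg_pi_div_two_le_of_le (by linarith [hφ.1, Real.pi_pos]) hφ.2
  have hΔ := legendreDelta_pos q φ
  simp only [phaseNum, zero_mul, add_zero]
  gcongr
  exact le_add_of_nonneg_right (by positivity)

theorem abs_phaseNumDeriv_div_add_le (hq : 0 < q) (ht : 0 < t) (hK : 0 ≤ K)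
    (hφ : φ ∈ Icc 0 (π / 2)) :
    |phaseNumDeriv q t K φ| / (phaseNum q t K φ ^ 2 + q ^ 2 * t) +
        q ^ 2 * t / (legendreDelta q φ * (phaseNum q t K φ ^ 2 + q ^ 2 * t)) ≤
      phaseNumDeriv q t K φ / (phaseNum q t K φ ^ 2 + q ^ 2 * t) -
        5 * (phaseNumDeriv q t 0 φ / (phaseNum q t 0 φ ^ 2 + q ^ 2 * t)) +
        3 / t * (1 / √(1 + (2 * q / π * φ) ^ 2)) := by
  have hΔ := legendreDelta_pos q φ
  have hE := abs_phaseNumDeriv_le hq.le ht.le hK hφ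
  have hE₀ : 0 ≤ -phaseNumDeriv q t 0 φ := by
    have habs := abs_phaseNumDeriv_neg hq.le ht.le le_rfl hφ
    rw [neg_zero] at habs
    exact habs ▸ abs_nonneg _
  have hN := sq_phaseNum_zero_le hq.le ht.le hK hφ
  have hfree := sq_div_le_phaseNumDeriv_add hq ht le_rfl hφ
  rw [neg_zero, zero_div, mul_zero, zero_mul, add_zero] at hfree
  have hslope : |phaseNumDeriv q t K φ| / (phaseNum q t K φ ^ 2 + q ^ 2 * t) ≤
      phaseNumDeriv q t K φ / (phaseNum q t K φ ^ 2 + q ^ 2 * t) -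
        2 * (phaseNumDeriv q t 0 φ / (phaseNum q t 0 φ ^ 2 + q ^ 2 * t)) := calc
    _ ≤ (phaseNumDeriv q t K φ - 2 * phaseNumDeriv q t 0 φ) /
          (phaseNum q t K φ ^ 2 + q ^ 2 * t) := by gcongr
    _ = phaseNumDeriv q t K φ / (phaseNum q t K φ ^ 2 + q ^ 2 * t) +
          2 * (-phaseNumDeriv q t 0 φ / (phaseNum q t K φ ^ 2 + q ^ 2 * t)) := by ring
    _ ≤ phaseNumDeriv q t K φ / (phaseNum q t K φ ^ 2 + q ^ 2 * t) +
          2 * (-phaseNumDeriv q t 0 φ / (phaseNum q t 0 φ ^ 2 + q ^ 2 * t)) := by gcongr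
    _ = _ := by ring
  have hmono : q ^ 2 * t / (legendreDelta q φ * (phaseNum q t K φ ^ 2 + q ^ 2 * t)) ≤
      q ^ 2 * t / (legendreDelta q φ * (phaseNum q t 0 φ ^ 2 + q ^ 2 * t)) := by gcongr
  linarith

end Phase

section OscillatoryBound

variable {q t K : ℝ}

theorem abs_integral_cos_oscPhase_neg_le (hq : 0 < q) (ht : 0 < t) (hK : 0 ≤ K) :
    |∫ φ in 0..π / 2, Real.cos (oscPhase q t (-K) φ) / legendreDelta q φ| ≤
      (1 + 4 * π) / (q * √t) + 3 / t * (π / (2 * q) * Real.arsinh q) +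
        3 * (K / (t * q)) * (π / (2 * q) * (π / 2)) := by
  set l := q * √t with hl
  have hl0 : 0 < l := by positivity
  have hl2 : l ^ 2 = q ^ 2 * t := by rw [hl, mul_pow, Real.sq_sqrt ht.le]
  have hm : 2 * q / π ≠ 0 := by positivity
  have htest := abs_integral_cos_div_le (by positivity : 0 ≤ π / 2) hl0 (legendreDelta_pos q)
    (continuous_legendreDelta q) (hasDerivAt_oscPhase q t (-K)) (hasDerivAt_phaseNum q t (-K))
    (fun φ => (((hasDerivAt_arctan_div (hasDerivAt_phaseNum q t (-K) φ) hl0.ne').const_mul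
      (-4)).add ((hasDerivAt_arsinh_mul hm φ).const_mul (3 / t))).add
      ((hasDerivAt_arctan_mul hm φ).const_mul (3 * (K / (t * q))))) fun φ hφ => by
    rw [hl2, abs_phaseNumDeriv_neg hq.le ht.le hK hφ, neg_div]
    linarith [sq_div_le_phaseNumDeriv_add hq ht hK hφ]
  refine htest.trans ?_
  have hend : 2 * q / π * (π / 2) = q := by field_simp
  have harctan := abs_le.mp (abs_arctan_div_sub_le hl0 (phaseNum q t (-K) (π / 2) / l)
    (phaseNum q t (-K) 0 / l))
  have harctan_scale : Real.arctan q / (2 * q / π) = π / (2 * q) * Real.arctan q := by field_simp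
  have hfreq : 3 * (K / (t * q)) * (Real.arctan q / (2 * q / π)) ≤
      3 * (K / (t * q)) * (π / (2 * q) * (π / 2)) := by
    rw [harctan_scale]
    gcongr
    exact (Real.arctan_lt_pi_div_two q).le
  have harsinh : Real.arsinh q / (2 * q / π) = π / (2 * q) * Real.arsinh q := by field_simp
  have hsplit : (1 + 4 * π) / l = 1 / l + 4 * (π / l) := by ring
  simp only [Pi.add_apply, hend, mul_zero, Real.arsinh_zero, Real.arctan_zero, zero_div, harsinh]
  linarith [harctan.1]

theorem abs_integral_cos_oscPhase_le (hq : 0 < q) (ht : 0 < t) (hK : 0 ≤ K) :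
    |∫ φ in 0..π / 2, Real.cos (oscPhase q t K φ) / legendreDelta q φ| ≤
      (1 + 6 * π) / (q * √t) + 3 / t * (π / (2 * q) * Real.arsinh q) := by
  set l := q * √t with hl
  have hl0 : 0 < l := by positivity
  have hl2 : l ^ 2 = q ^ 2 * t := by rw [hl, mul_pow, Real.sq_sqrt ht.le]
  have hm : 2 * q / π ≠ 0 := by positivity
  have htest := abs_integral_cos_div_le (by positivity : 0 ≤ π / 2) hl0 (legendreDelta_pos q)
    (continuous_legendreDelta q) (hasDerivAt_oscPhase q t K) (hasDerivAt_phaseNum q t K)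
    (fun φ => ((hasDerivAt_arctan_div (hasDerivAt_phaseNum q t K φ) hl0.ne').sub
      ((hasDerivAt_arctan_div (hasDerivAt_phaseNum q t 0 φ) hl0.ne').const_mul 5)).add
      ((hasDerivAt_arsinh_mul hm φ).const_mul (3 / t))) fun φ hφ => by
    rw [hl2]
    exact abs_phaseNumDeriv_div_add_le hq ht hK hφ
  refine htest.trans ?_
  have hend : 2 * q / π * (π / 2) = q := by field_simp
  have harctan := abs_le.mp (abs_arctan_div_sub_le hl0 (phaseNum q t K (π / 2) / l)
    (phaseNum q t K 0 / l))
  have harctan₀ := abs_le.mp (abs_arctan_div_sub_le hl0 (phaseNum q t 0 (π / 2) / l)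
    (phaseNum q t 0 0 / l))
  have harsinh : Real.arsinh q / (2 * q / π) = π / (2 * q) * Real.arsinh q := by field_simp
  have hsplit : (1 + 6 * π) / l = 1 / l + 6 * (π / l) := by ring
  simp only [Pi.add_apply, Pi.sub_apply, hend, mul_zero, Real.arsinh_zero, zero_div, harsinh]
  linarith [harctan.2, harctan₀.1]

theorem oscIntegral_eq_sub (K t q : ℝ) :
    oscIntegral K t q = 1 / 2 *
      ((∫ φ in 0..π / 2, Real.cos (oscPhase q t (-K) φ) / legendreDelta q φ) -
        ∫ φ in 0..π / 2, Real.cos (oscPhase q t K φ) / legendreDelta q φ) := by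
  rw [← intervalIntegral.integral_sub
    ((continuous_cos_oscPhase_div q t (-K)).intervalIntegrable _ _)
    ((continuous_cos_oscPhase_div q t K).intervalIntegrable _ _),
    ← intervalIntegral.integral_const_mul, oscIntegral]
  congr with φ
  rw [oscPhase, oscPhase, neg_mul, ← sub_eq_add_neg, Real.cos_sub, Real.cos_add, legendreDelta]
  ring

theorem abs_oscIntegral_le (hq : 0 < q) (ht : 0 < t) (hK : 0 ≤ K) :
    |oscIntegral K t q| ≤
      20 * (1 / (q * √t) + Real.arsinh q / (t * q) + K / (t * q ^ 2)) := by
  have hπ := Real.pi_lt_d2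
  have hars : 0 ≤ Real.arsinh q := Real.arsinh_nonneg_iff.mpr hq.le
  have hminus := abs_integral_cos_oscPhase_neg_le hq ht hK
  have hplus := abs_integral_cos_oscPhase_le hq ht hK
  have hfirst : (1 + 4 * π) / (q * √t) + (1 + 6 * π) / (q * √t) ≤ 40 * (1 / (q * √t)) := calc
    _ = (2 + 10 * π) * (1 / (q * √t)) := by ring
    _ ≤ 40 * (1 / (q * √t)) := by gcongr; linarith
  have hsecond : 3 / t * (π / (2 * q) * Real.arsinh q) ≤ 20 * (Real.arsinh q / (t * q)) := calc
    _ = 3 / 2 * π * (Real.arsinh q / (t * q)) := by field_simp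
    _ ≤ 20 * (Real.arsinh q / (t * q)) := by gcongr; linarith
  have hthird : 3 * (K / (t * q)) * (π / (2 * q) * (π / 2)) ≤ 40 * (K / (t * q ^ 2)) := calc
    _ = 3 / 4 * (π * π) * (K / (t * q ^ 2)) := by field_simp; norm_num
    _ ≤ 40 * (K / (t * q ^ 2)) := by gcongr; nlinarith [Real.pi_pos]
  rw [oscIntegral_eq_sub, abs_mul, abs_of_pos (by norm_num : (0 : ℝ) < 1 / 2)]
  linarith [abs_sub (∫ φ in 0..π / 2, Real.cos (oscPhase q t (-K) φ) / legendreDelta q φ)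
    (∫ φ in 0..π / 2, Real.cos (oscPhase q t K φ) / legendreDelta q φ)]

end OscillatoryBound

theorem mbIntegrand_neg (k : ℕ) (t c z : ℝ) : mbIntegrand k (-t) c z = mbIntegrand k t c z := by
  funext τ
  rw [mbIntegrand, mbIntegrand, Complex.ofReal_neg, neg_mul, ← sub_eq_add_neg, sub_neg_eq_add,
    mul_comm (Complex.Gamma (k - t * I + c + τ * I))]

theorem arsinh_sqrt_le {z : ℝ} (hz : 1 ≤ z) : Real.arsinh √z ≤ 2 * (1 + |Real.log z|) := by
  have hq : 1 ≤ √z := Real.one_le_sqrt.mpr hz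
  have hroot : √(1 + √z ^ 2) ≤ 2 * √z := by
    rw [Real.sqrt_le_left (by positivity)]
    nlinarith
  calc Real.arsinh √z ≤ Real.log (3 * √z) := Real.log_le_log (by positivity) (by linarith)
    _ = Real.log 3 + Real.log z / 2 := by
      rw [Real.log_mul (by norm_num) (by positivity), Real.log_sqrt (by positivity)]
    _ ≤ 2 * (1 + |Real.log z|) := by
      linarith [Real.log_le_sub_one_of_pos (by norm_num : (0 : ℝ) < 3), le_abs_self (Real.log z),
        abs_nonneg (Real.log z)]

theorem abs_oscIntegral_le_two (K t q : ℝ) : |oscIntegral K t q| ≤ 2 := by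
  have hbound := intervalIntegral.norm_integral_le_of_norm_le_const (a := 0) (b := π / 2) (C := 1)
    (f := fun φ => Real.sin (2 * t * Real.arsinh (q * Real.sin φ)) * Real.sin (K * φ) /
      √(1 + (q * Real.sin φ) ^ 2)) fun φ _ => by
    have hroot : 1 ≤ √(1 + (q * Real.sin φ) ^ 2) :=
      Real.one_le_sqrt.mpr (le_add_of_nonneg_right (sq_nonneg _))
    rw [norm_div, norm_mul, Real.norm_of_nonneg (Real.sqrt_nonneg _), div_le_one (by positivity)]
    exact (mul_le_one₀ (Real.abs_sin_le_one _) (abs_nonneg _) (Real.abs_sin_le_one _)).trans hroot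
  rw [← oscIntegral, Real.norm_eq_abs, sub_zero, abs_of_pos Real.pi_div_two_pos, one_mul] at hbound
  linarith [Real.pi_le_four]

theorem one_div_sqrt_le {t : ℝ} (ht : 1 ≤ t) : 1 / √t ≤ 2 / √(3 + t) := by
  rw [div_le_div_iff₀ (by positivity) (by positivity), one_mul, Real.sqrt_le_left (by positivity),
    mul_pow, Real.sq_sqrt (by positivity)]
  linarith

theorem sqrt_mul_abs_oscIntegral_le_of_one_le {k t z : ℝ} (hk : 1 / 2 ≤ k) (ht : 1 ≤ t)
    (hz : 1 ≤ z) :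
    √z * |oscIntegral (2 * k - 1) t √z| ≤
      160 * ((1 + |Real.log z|) / √(3 + t) + 1 / √z * ((k + (3 + t)) / (3 + t))) := by
  have hq : 0 < √z := Real.sqrt_pos.mpr (by linarith)
  have hroot := one_div_sqrt_le ht
  have hinv : 1 / t ≤ 2 / √(3 + t) := by
    refine (one_div_le_one_div_of_le (by positivity) ?_).trans hroot
    rw [Real.sqrt_le_left (by positivity)]
    nlinarith
  have hfreq : (2 * k - 1) / t ≤ 8 * ((k + (3 + t)) / (3 + t)) := by
    rw [mul_div_assoc', div_le_div_iff₀ (by positivity) (by positivity)]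
    nlinarith
  have hlog : 0 ≤ |Real.log z| / √(3 + t) := by positivity
  calc √z * |oscIntegral (2 * k - 1) t √z|
      ≤ √z * (20 * (1 / (√z * √t) + Real.arsinh √z / (t * √z) +
          (2 * k - 1) / (t * √z ^ 2))) := by
        gcongr
        exact abs_oscIntegral_le hq (by positivity) (by linarith)
    _ = 20 * (1 / √t + Real.arsinh √z * (1 / t) + 1 / √z * ((2 * k - 1) / t)) := by
        field_simp
    _ ≤ 20 * (2 / √(3 + t) + 2 * (1 + |Real.log z|) * (2 / √(3 + t)) +
          1 / √z * (8 * ((k + (3 + t)) / (3 + t)))) := by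
        gcongr
        exact arsinh_sqrt_le hz
    _ ≤ _ := by
        ring_nf at hlog ⊢
        linarith [show 0 < (√(3 + t))⁻¹ by positivity]

theorem sqrt_mul_abs_oscIntegral_le_of_le_one (K t : ℝ) {z : ℝ} (hz : 0 < z) (hz1 : z ≤ 1) :
    √z * |oscIntegral K t √z| ≤ 2 / √z := by
  have hqinv : √z ≤ 1 / √z := by
    rwa [le_div_iff₀ (Real.sqrt_pos.mpr hz), Real.mul_self_sqrt hz.le]
  calc √z * |oscIntegral K t √z| ≤ 1 / √z * 2 := by
        gcongr
        exact abs_oscIntegral_le_two _ _ _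
    _ = 2 / √z := by rw [one_div_mul_eq_div]

theorem sqrt_mul_abs_oscIntegral_le {k t z : ℝ} (hk : 1 / 2 ≤ k) (ht : 1 ≤ t) (hz : 0 < z) :
    √z * |oscIntegral (2 * k - 1) t √z| ≤
      160 * ((1 + |Real.log z|) / √(3 + t) + 1 / √z * ((k + (3 + t)) / (3 + t))) := by
  rcases le_total 1 z with hz1 | hz1
  · exact sqrt_mul_abs_oscIntegral_le_of_one_le hk ht hz1
  have hfactor : 1 ≤ (k + (3 + t)) / (3 + t) := by
    rw [one_le_div (by positivity)]
    linarith
  calc √z * |oscIntegral (2 * k - 1) t √z| ≤ 2 / √z :=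
        sqrt_mul_abs_oscIntegral_le_of_le_one _ _ hz hz1
    _ ≤ 160 * (1 / √z * 1) := by
        rw [mul_one, mul_one_div]
        gcongr
        norm_num
    _ ≤ 160 * (1 / √z * ((k + (3 + t)) / (3 + t))) := by gcongr
    _ ≤ _ := by
        gcongr
        exact le_add_of_nonneg_left (by positivity)

theorem cosh_le_two_mul_sinh {x : ℝ} (hx : 1 ≤ x) : Real.cosh x ≤ 2 * Real.sinh x := by
  linarith [Real.cosh_sub_sinh x, Real.exp_le_one_iff.mpr (by linarith : -x ≤ 0),
    Real.self_le_sinh_iff.mpr (by linarith : 0 ≤ x)]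

section LargeSpectralParameter

variable {k : ℕ} {t z α : ℝ}

theorem cosh_mul_norm_integral_mbIntegrand_le_oscIntegral (ht : 1 ≤ t) (hz : 0 < z) (hα : 0 < α)
    (hαk : α < k) :
    Real.cosh (π * t) * ‖∫ τ, mbIntegrand k t (α - k) z τ‖ ≤
      8 * π * z ^ (-k : ℝ) * (√z * |oscIntegral (2 * k - 1) t √z|) := by
  have hπt : 1 ≤ π * t := by nlinarith [Real.pi_gt_three]
  have hsinh : 0 < Real.sinh (π * t) := Real.sinh_pos_iff.mpr (by linarith)
  calc Real.cosh (π * t) * ‖∫ τ, mbIntegrand k t (α - k) z τ‖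
      ≤ 2 * Real.sinh (π * t) * ‖∫ τ, mbIntegrand k t (α - k) z τ‖ := by
        gcongr
        exact cosh_le_two_mul_sinh hπt
    _ = 2 * ‖Real.sinh (π * t) * ∫ τ, mbIntegrand k t (α - k) z τ‖ := by
        rw [norm_mul, Complex.norm_real, Real.norm_of_nonneg hsinh.le, mul_assoc]
    _ = 8 * π * z ^ (-k : ℝ) * (√z * |oscIntegral (2 * k - 1) t √z|) := by
        rw [sinh_mul_integral_mbIntegrand_eq t hz hα hαk, Complex.norm_real, norm_mul,
          Real.norm_of_nonneg (by positivity), Real.norm_eq_abs]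
        ring

theorem cosh_mul_norm_integral_mbIntegrand_le_of_one_le (ht : 1 ≤ t) (hz : 0 < z) (hα : 0 < α)
    (hαk : α < k) :
    Real.cosh (π * t) * ‖∫ τ, mbIntegrand k t (α - k) z τ‖ ≤
      1280 * π * (z ^ (-k : ℝ) / √(3 + t) * (1 + |Real.log z|) +
        z ^ (-k - 1 / 2 : ℝ) * ((k + (3 + t)) / (3 + t))) := by
  have hk : (1 : ℝ) ≤ k := by exact_mod_cast Nat.cast_pos.mp (hα.trans hαk)
  calc _ ≤ 8 * π * z ^ (-k : ℝ) * (√z * |oscIntegral (2 * k - 1) t √z|) :=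
        cosh_mul_norm_integral_mbIntegrand_le_oscIntegral ht hz hα hαk
    _ ≤ 8 * π * z ^ (-k : ℝ) *
          (160 * ((1 + |Real.log z|) / √(3 + t) + 1 / √z * ((k + (3 + t)) / (3 + t)))) := by
        gcongr 8 * π * z ^ (-k : ℝ) * ?_
        exact sqrt_mul_abs_oscIntegral_le (one_half_lt_one.le.trans hk) ht hz
    _ = _ := by
        rw [Real.rpow_sub hz, ← Real.sqrt_eq_rpow]
        ring

theorem cosh_mul_norm_integral_mbIntegrand_le_of_one_le_abs (ht : 1 ≤ |t|) (hz : 0 < z)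
    (hα : 0 < α) (hαk : α < k) :
    Real.cosh (π * t) * ‖∫ τ, mbIntegrand k t (α - k) z τ‖ ≤
      1280 * π * (z ^ (-k : ℝ) / √(3 + |t|) * (1 + |Real.log z|) +
        z ^ (-k - 1 / 2 : ℝ) * ((k + (3 + |t|)) / (3 + |t|))) := by
  rcases abs_choice t with habs | habs
  · rw [habs] at ht ⊢
    exact cosh_mul_norm_integral_mbIntegrand_le_of_one_le ht hz hα hαk
  · rw [habs] at ht ⊢
    rw [← mbIntegrand_neg, ← Real.cosh_neg, ← mul_neg]
    exact cosh_mul_norm_integral_mbIntegrand_le_of_one_le ht hz hα hαk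

end LargeSpectralParameter

theorem exists_cosh_mul_norm_integral_mbIntegrand_le_of_abs_le_one :
    ∃ C : ℝ, 0 < C ∧ ∀ (k : ℕ) (t z α : ℝ), |t| ≤ 1 → 0 < z → 0 < α → α < k →
      Real.cosh (π * t) * ‖∫ τ, mbIntegrand k t (α - k) z τ‖ ≤
        C * (z ^ (-k : ℝ) / √(3 + |t|) * (1 + |Real.log z|)) := by
  obtain ⟨C, hC, hbound⟩ := exists_norm_integral_mbIntegrand_le
  refine ⟨2 * Real.cosh π * C, by positivity, fun k t z α ht hz hα hαk => ?_⟩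
  have hcosh : Real.cosh (π * t) ≤ Real.cosh π := by
    rw [Real.cosh_le_cosh, abs_mul]
    exact mul_le_of_le_one_right (abs_nonneg π) ht
  have hroot : √(3 + |t|) ≤ 2 := by
    rw [Real.sqrt_le_left (by norm_num)]
    linarith
  calc Real.cosh (π * t) * ‖∫ τ, mbIntegrand k t (α - k) z τ‖
      ≤ Real.cosh π * (C * (z ^ (-k : ℝ) * (1 + |Real.log z|))) := by
        gcongr
        exact hbound k t z α hz hα hαk
    _ = Real.cosh π * C * (z ^ (-k : ℝ) / √(3 + |t|) * (1 + |Real.log z|)) * √(3 + |t|) := by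
        field_simp
    _ ≤ Real.cosh π * C * (z ^ (-k : ℝ) / √(3 + |t|) * (1 + |Real.log z|)) * 2 := by gcongr
    _ = _ := by ring

theorem norm_one_div_two_pi_mul_le (w : ℂ) : ‖(1 / (2 * π) : ℂ) * w‖ ≤ ‖w‖ := by
  rw [norm_mul]
  refine mul_le_of_le_one_left (norm_nonneg w) ?_
  rw [norm_div, norm_one, norm_mul, Complex.norm_two, Complex.norm_real,
    Real.norm_of_nonneg Real.pi_pos.le, div_le_one (by positivity)]
  linarith [Real.pi_gt_three]

end MellinBarnes

open MellinBarnes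

theorem mellin_barnes_bound_general :
    ∃ C : ℝ, 0 < C ∧ ∀ (k : ℕ) (t z c : ℝ), 0 < z → -(k : ℝ) < c → c < 0 →
      Integrable (mbIntegrand k t c z) ∧
      Real.cosh (Real.pi * t) * ‖(1 / (2 * Real.pi) : ℂ) * ∫ τ : ℝ, mbIntegrand k t c z τ‖ ≤
        C * (z ^ (-(k : ℝ)) / √(3 + |t|) * (1 + |Real.log z|) +
          z ^ (-(k : ℝ) - 1 / 2) * ((k + (3 + |t|)) / (3 + |t|))) := by
  obtain ⟨C, hC, hsmall⟩ := exists_cosh_mul_norm_integral_mbIntegrand_le_of_abs_le_one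
  refine ⟨C + 1280 * Real.pi, by positivity, fun k t z c hz hkc hc => ?_⟩
  obtain ⟨α, rfl⟩ : ∃ α, c = α - k := ⟨c + k, by ring⟩
  have hα : 0 < α := by linarith
  have hαk : α < k := by linarith
  refine ⟨integrable_mbIntegrand t hz hα hαk, ?_⟩
  refine (mul_le_mul_of_nonneg_left (norm_one_div_two_pi_mul_le _) (Real.cosh_pos _).le).trans ?_
  rcases le_total |t| 1 with ht | ht
  · refine (hsmall k t z α ht hz hα hαk).trans ?_
    gcongr
    · exact le_add_of_nonneg_right (by positivity)
    · exact le_add_of_nonneg_right (by positivity)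
  · refine (cosh_mul_norm_integral_mbIntegrand_le_of_one_le_abs ht hz hα hαk).trans ?_
    gcongr
    exact le_add_of_nonneg_left hC.le

/-- There is an absolute constant `C > 0` such that for every integer `k ≥ 1`, real `t`
(with `T = 3 + |t|`), real `z > 0` and `-k < c < 0`, the absolutely convergent Mellin–Barnes
integral `M = (1/2π) ∫_ℝ Γ(k+it+c+iτ)Γ(k-it+c+iτ)Γ(-(c+iτ))/Γ(2k+c+iτ) z^{c+iτ} dτ` satisfies
`cosh(πt) |M| ≤ C [ z^{-k}/√T (1+|log z|+log k) + z^{-k-1/2} (k+T)/T ]`. -/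
theorem mellin_barnes_bound :
    ∃ C : ℝ, 0 < C ∧ ∀ (k : ℕ), 1 ≤ k → ∀ (t z c : ℝ), 0 < z →
      -(k : ℝ) < c → c < 0 →
      Integrable (mbIntegrand k t c z) ∧
      Real.cosh (Real.pi * t) *
          ‖(1 / (2 * Real.pi) : ℂ) * ∫ τ : ℝ, mbIntegrand k t c z τ‖
        ≤ C * (z ^ (-(k : ℝ)) / Real.sqrt (3 + |t|) *
              (1 + |Real.log z| + Real.log k) +
            z ^ (-(k : ℝ) - 1 / 2) * (((k : ℝ) + (3 + |t|)) / (3 + |t|))) := by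
  obtain ⟨C, hC, hbound⟩ := mellin_barnes_bound_general
  refine ⟨C, hC, fun k _ t z c hz hkc hc => (hbound k t z c hz hkc hc).imp_right fun h => ?_⟩
  refine h.trans ?_
  gcongr C * (_ * ?_ + _)
  exact le_add_of_nonneg_right (Real.log_natCast_nonneg k)
end

section
/- There is an absolute constant \(C>0\) such that for every integer \(k\geq 1\), every real \(t\) and every \(0<z<1\): \(z^{k}\,\Bigl|\frac{\Gamma(k-it)\Gamma(k+it)}{\Gamma(2k)}\,{}_2F_1\bigl(k+it,\,k-it,\,2k;\,z\bigr)\Bigr|\;\leq\; C\,\sqrt{\frac{z}{1-z}}\;\frac{1}{k+|t|}\). -/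
/-- The Gauss hypergeometric series
`₂F₁(a,b,c;z) = Γ(c)/(Γ(a)Γ(b)) ∑_{n≥0} Γ(a+n)Γ(b+n)/Γ(c+n) zⁿ/n!` (convergent for `|z| < 1`). -/
noncomputable def hyp2F1 (a b c z : ℂ) : ℂ :=
  Complex.Gamma c / (Complex.Gamma a * Complex.Gamma b) *
    ∑' n : ℕ, Complex.Gamma (a + n) * Complex.Gamma (b + n) / Complex.Gamma (c + n) *
      z ^ n / (n.factorial : ℂ)

/-!
Write `a = k + it`. The function to be bounded is `∑ cₙ zⁿ` with
`cₙ = |Γ(a + n)|² / (Γ(2k + n) n!)`, and the point is that `cₙ (n + |a|²)` increases to `1`: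
monotonicity is a polynomial inequality between consecutive terms, and log-convexity of `Γ` gives
`cₙ ≤ 1 / n`, which controls the limit. Hence `cₙ ≤ 1 / (n + |a|²)`, and the Cauchy–Schwarz
inequality bounds `∑ zⁿ / (n + |a|²)` by a constant times `1 / (|a| √(1 - z))`.
-/

open Filter Topology Finset
open scoped Nat ComplexConjugate

lemma norm_complexGamma_le_Gamma_re {s : ℂ} (hs : 0 < s.re) :
    ‖Complex.Gamma s‖ ≤ Real.Gamma s.re := by
  rw [Complex.Gamma_eq_integral hs, Real.Gamma_eq_integral hs, Complex.GammaIntegral]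
  refine (MeasureTheory.norm_integral_le_integral_norm _).trans_eq ?_
  refine MeasureTheory.setIntegral_congr_fun measurableSet_Ioi fun x (hx : 0 < x) ↦ ?_
  simp [Complex.norm_cpow_eq_rpow_re_of_pos hx, Complex.norm_exp]

lemma realGamma_midpoint_sq_le {x y : ℝ} (hx : 0 < x) (hy : 0 < y) :
    Real.Gamma ((x + y) / 2) ^ 2 ≤ Real.Gamma x * Real.Gamma y := by
  have hpos := Real.Gamma_pos_of_pos (half_pos (add_pos hx hy))
  have h := Real.Gamma_mul_add_mul_le_rpow_Gamma_mul_rpow_Gamma hx hy one_half_pos one_half_pos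
    (by norm_num)
  rw [show 1 / 2 * x + 1 / 2 * y = (x + y) / 2 by ring, ← Real.sqrt_eq_rpow, ← Real.sqrt_eq_rpow,
    ← Real.sqrt_mul (Real.Gamma_pos_of_pos hx).le] at h
  exact (Real.le_sqrt' hpos).mp h

/-- The coefficient of `zⁿ` in `Γ(a) Γ(ā) / Γ(2 Re a) · ₂F₁(a, ā, 2 Re a; z)`. -/
noncomputable def conjHypCoeff (a : ℂ) (n : ℕ) : ℝ :=
  ‖Complex.Gamma (a + n)‖ ^ 2 / (Real.Gamma (2 * a.re + n) * n !)

section conjHypCoeff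

variable {a : ℂ} (ha : 0 < a.re)
include ha

lemma conjHypCoeff_nonneg (n : ℕ) : 0 ≤ conjHypCoeff a n := by
  unfold conjHypCoeff
  positivity

lemma conjHypCoeff_succ (n : ℕ) :
    conjHypCoeff a (n + 1) = ‖a + n‖ ^ 2 / ((2 * a.re + n) * (n + 1)) * conjHypCoeff a n := by
  have hre : 0 < (a + n).re := by simpa using add_pos_of_pos_of_nonneg ha n.cast_nonneg
  have hne : a + n ≠ 0 := fun h ↦ by simp [h] at hre
  have hpos : 0 < 2 * a.re + n := by positivity
  unfold conjHypCoeff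
  push_cast [Nat.factorial_succ]
  rw [← add_assoc, ← add_assoc, Complex.Gamma_add_one _ hne, Real.Gamma_add_one hpos.ne', norm_mul]
  field_simp

lemma conjHypCoeff_le_inv {n : ℕ} (hn : n ≠ 0) : conjHypCoeff a n ≤ (n : ℝ)⁻¹ := by
  have hn' : (0 : ℝ) < n := by positivity
  have hpos : 0 < 2 * a.re + n := by positivity
  have hfact : (n ! : ℝ) = n * Real.Gamma n := by
    rw [← Real.Gamma_nat_eq_factorial, Real.Gamma_add_one hn'.ne']
  have hnorm : ‖Complex.Gamma (a + n)‖ ^ 2 ≤ Real.Gamma (2 * a.re + n) * Real.Gamma n := by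
    calc ‖Complex.Gamma (a + n)‖ ^ 2 ≤ Real.Gamma (a.re + n) ^ 2 := by
          gcongr
          simpa using norm_complexGamma_le_Gamma_re (s := a + n)
            (by simpa using add_pos ha hn')
      _ = Real.Gamma ((2 * a.re + n + n) / 2) ^ 2 := by ring_nf
      _ ≤ _ := realGamma_midpoint_sq_le hpos hn'
  rw [conjHypCoeff, hfact, div_le_iff₀ (by positivity)]
  field_simp
  linarith

lemma monotone_conjHypCoeff_mul : Monotone fun n : ℕ ↦ conjHypCoeff a n * (n + ‖a‖ ^ 2) := by
  refine monotone_nat_of_le_succ fun n ↦ ?_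
  have hsq (m : ℕ) : ‖a + m‖ ^ 2 = m ^ 2 + 2 * a.re * m + ‖a‖ ^ 2 := by
    simp only [Complex.sq_norm, Complex.normSq_apply, Complex.add_re, Complex.add_im,
      Complex.natCast_re, Complex.natCast_im]
    ring
  -- The slack `‖a‖² ‖a - 1‖²` of `hstep` after clearing denominators.
  have hslack : 0 ≤ ‖a‖ ^ 2 * (1 + ‖a‖ ^ 2 - 2 * a.re) := by
    have : 0 ≤ 1 + ‖a‖ ^ 2 - 2 * a.re := by
      nlinarith [a.re_le_norm, sq_nonneg (‖a‖ - 1)]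
    positivity
  have hstep : n + ‖a‖ ^ 2 ≤
      ‖a + n‖ ^ 2 / ((2 * a.re + n) * (n + 1)) * ((n + 1 : ℕ) + ‖a‖ ^ 2) := by
    rw [div_mul_eq_mul_div, le_div_iff₀ (by positivity), hsq]
    push_cast
    linarith
  calc conjHypCoeff a n * (n + ‖a‖ ^ 2)
      ≤ conjHypCoeff a n *
          (‖a + n‖ ^ 2 / ((2 * a.re + n) * (n + 1)) * ((n + 1 : ℕ) + ‖a‖ ^ 2)) :=
        mul_le_mul_of_nonneg_left hstep (conjHypCoeff_nonneg ha n)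
    _ = conjHypCoeff a (n + 1) * ((n + 1 : ℕ) + ‖a‖ ^ 2) := by
        rw [conjHypCoeff_succ ha]
        ring

lemma conjHypCoeff_le_one_div (n : ℕ) : conjHypCoeff a n ≤ 1 / (n + ‖a‖ ^ 2) := by
  have hnorm : 0 < ‖a‖ := ha.trans_le a.re_le_norm
  have hlim : Tendsto (fun m : ℕ ↦ 1 + ‖a‖ ^ 2 / (m : ℝ)) atTop (𝓝 1) := by
    simpa using (tendsto_const_div_atTop_nhds_zero_nat (‖a‖ ^ 2)).const_add 1
  rw [le_div_iff₀ (by positivity)]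
  refine ge_of_tendsto hlim ?_
  filter_upwards [eventually_ge_atTop n, eventually_ne_atTop 0] with m hnm hm
  calc conjHypCoeff a n * (n + ‖a‖ ^ 2)
      ≤ conjHypCoeff a m * (m + ‖a‖ ^ 2) := monotone_conjHypCoeff_mul ha hnm
    _ ≤ (m : ℝ)⁻¹ * (m + ‖a‖ ^ 2) := by
        gcongr
        exact conjHypCoeff_le_inv ha hm
    _ = 1 + ‖a‖ ^ 2 / m := by field_simp

lemma Gamma_mul_hyp2F1_conj_eq_tsum (z : ℂ) :
    Complex.Gamma (conj a) * Complex.Gamma a / Complex.Gamma (2 * a.re) *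
        hyp2F1 a (conj a) (2 * a.re) z = ∑' n, (conjHypCoeff a n : ℂ) * z ^ n := by
  have hΓa : Complex.Gamma a ≠ 0 := Complex.Gamma_ne_zero_of_re_pos ha
  have hΓconj : Complex.Gamma (conj a) ≠ 0 := Complex.Gamma_ne_zero_of_re_pos (by simpa)
  have hΓre : Complex.Gamma (2 * a.re) ≠ 0 := Complex.Gamma_ne_zero_of_re_pos (by simpa)
  have hterm (n : ℕ) : Complex.Gamma (a + n) * Complex.Gamma (conj a + n) /
      Complex.Gamma (2 * a.re + n) * z ^ n / n ! = conjHypCoeff a n * z ^ n := by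
    rw [show conj a + n = conj (a + n) by simp, Complex.Gamma_conj, Complex.mul_conj',
      show (2 * a.re + n : ℂ) = (2 * a.re + n : ℝ) by push_cast; rfl, Complex.Gamma_ofReal,
      conjHypCoeff]
    push_cast
    ring
  rw [hyp2F1, tsum_congr hterm, ← mul_assoc]
  convert one_mul _ using 2
  field_simp

end conjHypCoeff

lemma sum_range_sq_one_div_add_le {s : ℝ} (hs : 0 < s) (N : ℕ) :
    ∑ n ∈ range N, (1 / (n + s)) ^ 2 ≤ (1 + 1 / s) / s := by
  have hterm (n : ℕ) :
      (1 / (n + s)) ^ 2 ≤ (1 + 1 / s) * (1 / (n + s) - 1 / ((n + 1 : ℕ) + s)) := by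
    push_cast
    have hle : 1 / (n + s) ≤ 1 / s := by gcongr; simp
    calc (1 / (n + s)) ^ 2
        = (1 + 1 / (n + s)) * (1 / (n + s) - 1 / (n + 1 + s)) := by field_simp; ring
      _ ≤ _ := by
        gcongr
        exact sub_nonneg.mpr (by gcongr; simp)
  calc ∑ n ∈ range N, (1 / (n + s)) ^ 2
      ≤ ∑ n ∈ range N, (1 + 1 / s) * (1 / (n + s) - 1 / ((n + 1 : ℕ) + s)) :=
        sum_le_sum fun n _ ↦ hterm n
    _ = (1 + 1 / s) * (1 / s - 1 / (N + s)) := by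
        rw [← mul_sum, sum_range_sub' fun n : ℕ ↦ 1 / (n + s)]
        simp
    _ ≤ (1 + 1 / s) * (1 / s) := by
        gcongr
        exact sub_le_self _ (by positivity)
    _ = (1 + 1 / s) / s := by ring

lemma sum_range_one_div_add_mul_pow_le {s z : ℝ} (hs : 0 < s) (hz0 : 0 ≤ z) (hz1 : z < 1)
    (N : ℕ) :
    ∑ n ∈ range N, 1 / (n + s) * z ^ n ≤ √((1 + 1 / s) / s) * √(1 / (1 - z)) := by
  have hgeom : ∑ n ∈ range N, (z ^ n) ^ 2 ≤ 1 / (1 - z) := by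
    calc ∑ n ∈ range N, (z ^ n) ^ 2 ≤ ∑ n ∈ range N, z ^ n :=
          sum_le_sum fun n _ ↦ pow_le_of_le_one (by positivity) (pow_le_one₀ hz0 hz1.le) two_ne_zero
      _ ≤ ∑' n, z ^ n :=
          (summable_geometric_of_lt_one hz0 hz1).sum_le_tsum _ fun n _ ↦ by positivity
      _ = 1 / (1 - z) := by rw [tsum_geometric_of_lt_one hz0 hz1, one_div]
  refine (Real.sum_mul_le_sqrt_mul_sqrt _ _ _).trans ?_
  gcongr
  exact sum_range_sq_one_div_add_le hs N

lemma norm_Gamma_mul_hyp2F1_conj_le {a : ℂ} {z : ℝ} (ha : 0 < a.re) (hz0 : 0 ≤ z) (hz1 : z < 1) :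
    ‖Complex.Gamma (conj a) * Complex.Gamma a / Complex.Gamma (2 * a.re) *
        hyp2F1 a (conj a) (2 * a.re) z‖ ≤
      √((1 + 1 / ‖a‖ ^ 2) / ‖a‖ ^ 2) * √(1 / (1 - z)) := by
  have hnorm : 0 < ‖a‖ := ha.trans_le a.re_le_norm
  have hnonneg (n : ℕ) : 0 ≤ conjHypCoeff a n * z ^ n :=
    mul_nonneg (conjHypCoeff_nonneg ha n) (by positivity)
  have hreal : ∑' n, (conjHypCoeff a n : ℂ) * (z : ℂ) ^ n =
      (∑' n, conjHypCoeff a n * z ^ n : ℝ) := by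
    push_cast
    rfl
  rw [Gamma_mul_hyp2F1_conj_eq_tsum ha, hreal, Complex.norm_real,
    Real.norm_of_nonneg (tsum_nonneg hnonneg)]
  refine Real.tsum_le_of_sum_range_le hnonneg fun N ↦ ?_
  calc ∑ n ∈ range N, conjHypCoeff a n * z ^ n
      ≤ ∑ n ∈ range N, 1 / (n + ‖a‖ ^ 2) * z ^ n := by
        gcongr with n
        exact conjHypCoeff_le_one_div ha n
    _ ≤ _ := sum_range_one_div_add_mul_pow_le (by positivity) hz0 hz1 N

lemma sqrt_one_add_one_div_div_le {k t : ℝ} (hk : 1 / 2 ≤ k) :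
    √((1 + 1 / (k ^ 2 + t ^ 2)) / (k ^ 2 + t ^ 2)) ≤ √10 / (k + |t|) := by
  have hpos : 0 < k + |t| := by positivity
  have hs : 1 / 4 ≤ k ^ 2 + t ^ 2 := by nlinarith [sq_nonneg t]
  have hs' : (k + |t|) ^ 2 / 2 ≤ k ^ 2 + t ^ 2 := by
    nlinarith [sq_nonneg (k - |t|), sq_abs t]
  rw [le_div_iff₀ hpos, ← Real.sqrt_sq hpos.le, ← Real.sqrt_mul (by positivity)]
  refine Real.sqrt_le_sqrt ?_
  calc (1 + 1 / (k ^ 2 + t ^ 2)) / (k ^ 2 + t ^ 2) * (k + |t|) ^ 2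
      ≤ (1 + 1 / (1 / 4)) / ((k + |t|) ^ 2 / 2) * (k + |t|) ^ 2 := by gcongr
    _ = 10 := by field_simp; norm_num

theorem hypergeometric_bound_general :
    ∃ C : ℝ, 0 < C ∧ ∀ k : ℝ, 1 / 2 ≤ k → ∀ t z : ℝ, 0 < z → z < 1 →
      z ^ k * ‖Complex.Gamma ((k : ℂ) - t * Complex.I) *
          Complex.Gamma ((k : ℂ) + t * Complex.I) / Complex.Gamma (2 * (k : ℂ)) *
          hyp2F1 ((k : ℂ) + t * Complex.I) ((k : ℂ) - t * Complex.I) (2 * (k : ℂ)) (z : ℂ)‖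
        ≤ C * √(z / (1 - z)) * (1 / (k + |t|)) := by
  refine ⟨√10, by positivity, fun k hk t z hz0 hz1 ↦ ?_⟩
  set a : ℂ := k + t * Complex.I with ha
  have hre : a.re = k := by simp [ha]
  have hconj : (k : ℂ) - t * Complex.I = conj a := by simp [ha, sub_eq_add_neg]
  have hnorm : ‖a‖ ^ 2 = k ^ 2 + t ^ 2 := by rw [Complex.sq_norm, ha, Complex.normSq_add_mul_I]
  have hbound := norm_Gamma_mul_hyp2F1_conj_le (a := a) (by linarith) hz0.le hz1
  rw [hre, hnorm] at hbound
  have hpow : z ^ k ≤ √z := by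
    rw [Real.sqrt_eq_rpow]
    exact Real.rpow_le_rpow_of_exponent_ge hz0 hz1.le hk
  rw [hconj]
  calc _ ≤ √z * (√10 / (k + |t|) * √(1 / (1 - z))) := by
        gcongr
        refine hbound.trans ?_
        gcongr
        exact sqrt_one_add_one_div_div_le hk
    _ = √10 * √(z / (1 - z)) * (1 / (k + |t|)) := by
        rw [div_eq_mul_one_div z, Real.sqrt_mul hz0.le]
        ring

/-- There is an absolute constant `C > 0` such that for every integer `k ≥ 1`, real `t` and
`0 < z < 1`:
`z^k |Γ(k-it)Γ(k+it)/Γ(2k) · ₂F₁(k+it, k-it, 2k; z)| ≤ C √(z/(1-z)) / (k+|t|)`. -/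
theorem hypergeometric_bound :
    ∃ C : ℝ, 0 < C ∧ ∀ (k : ℕ), 1 ≤ k → ∀ (t z : ℝ), 0 < z → z < 1 →
      z ^ k * ‖Complex.Gamma ((k : ℂ) - t * Complex.I) *
          Complex.Gamma ((k : ℂ) + t * Complex.I) / Complex.Gamma (2 * (k : ℂ)) *
          hyp2F1 ((k : ℂ) + t * Complex.I) ((k : ℂ) - t * Complex.I) (2 * (k : ℂ)) (z : ℂ)‖
        ≤ C * Real.sqrt (z / (1 - z)) * (1 / ((k : ℝ) + |t|)) := by
  obtain ⟨C, hC, h⟩ := hypergeometric_bound_general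
  exact ⟨C, hC, fun k hk t z hz0 hz1 ↦ by
    simpa using h k (one_half_lt_one.le.trans (by exact_mod_cast hk)) t z hz0 hz1⟩
end

section
/- Let \(u,v,\lambda\in\mathbb{C}\) with \(\mathrm{Re}\,v=0\), \(\mathrm{Re}\,u\geq 0\) and \(\mathrm{Re}\,\lambda>1+\mathrm{Re}\,u\), and let \(\Delta\) be real with \(1-2\mathrm{Re}\,\lambda<\Delta<-1-2\mathrm{Re}\,u\). Let \(F\) be the unique analytic function on \(\mathbb{C}\setminus[1,\infty)\) that agrees with the Gauss hypergeometric series \({}_2F_1(\lambda-u+v,\lambda-u-v,2\lambda;\,w)\) for \(|w|<1\). Then for every real \(z<0\), \(\frac{1}{2}(-z)^{1/2-\lambda}\cdot\frac{1}{2\pi}\int_{-\infty}^{\infty}\Gamma(u,v,\lambda;\Delta+i\tau)\,(-1/z)^{(\Delta+i\tau)/2}\,d\tau \;=\; \frac{\Gamma(\lambda-u+v)\Gamma(\lambda-u-v)}{\Gamma(2\lambda)}\,F(z)\), where the integral converges absolutely. -/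
open MeasureTheory

/-- `Γ(u,v,λ;s) = Γ(λ-1/2+s/2)/Γ(λ+1/2-s/2) · Γ(1/2-u+v-s/2) · Γ(1/2-u-v-s/2)`. -/
noncomputable def gammaFactor (u v lam s : ℂ) : ℂ :=
  Complex.Gamma (lam - 1 / 2 + s / 2) / Complex.Gamma (lam + 1 / 2 - s / 2) *
    Complex.Gamma (1 / 2 - u + v - s / 2) * Complex.Gamma (1 / 2 - u - v - s / 2)

/-!
The Mellin transform of `(1 + y) ^ (-a)` is the beta function, so `Γ(a) (1 + x) ^ (-a)` is the
inverse Mellin transform of `Γ(s) Γ(a - s)`. The remaining factors `Γ(b - s) / Γ(c - s)` of Barnes'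
integrand are, up to the constant `Γ(c - b)`, the Mellin transform at `1 - s` of the kernel
`t ^ (b - 1) (1 - t) ^ (c - b - 1)` on `(0, 1)`. By the Mellin–Parseval formula, Barnes' integral
is therefore the superposition of `Γ(a) (1 + x t) ^ (-a)` against this kernel, that is, Euler's
integral at `-x`. Euler's integral is analytic off `[1, ∞)` and equals a multiple of `₂F₁` near `0`
by the binomial series, hence equals the same multiple of `F` by the identity theorem.
The substitution `s ↦ λ - 1 / 2 + s / 2` turns `gammaFactor` into Barnes' integrand with
`a = λ - u + v`, `b = λ - u - v` and `c = 2 λ`.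
-/

section

open Complex Set Filter
open scoped Topology

lemma ne_neg_natCast_of_re_pos {s : ℂ} (hs : 0 < s.re) (n : ℕ) : s ≠ -n := by
  rintro rfl
  simp only [neg_re, natCast_re, Left.neg_pos_iff] at hs
  exact hs.not_ge n.cast_nonneg

lemma continuous_Gamma_comp {X : Type*} [TopologicalSpace X] {f : X → ℂ} (hf : Continuous f)
    (hpos : ∀ x, 0 < (f x).re) : Continuous fun x => Gamma (f x) :=
  continuous_iff_continuousAt.2 fun x =>
    (continuousAt_Gamma _ (ne_neg_natCast_of_re_pos (hpos x))).comp hf.continuousAt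

lemma norm_Gamma_le_Gamma_re {s : ℂ} (hs : 0 < s.re) : ‖Gamma s‖ ≤ Real.Gamma s.re := by
  rw [Gamma_eq_integral hs, GammaIntegral, Real.Gamma_eq_integral hs]
  refine (norm_integral_le_integral_norm _).trans_eq
    (setIntegral_congr_fun measurableSet_Ioi fun t (ht : 0 < t) => ?_)
  rw [norm_mul, norm_real, Real.norm_of_nonneg (Real.exp_pos _).le, norm_cpow_eq_rpow_re_of_pos ht,
    sub_re, one_re]

lemma norm_Gamma_le_div_sq_norm {s : ℂ} (hs : 0 < s.re) :
    ‖Gamma s‖ ≤ Real.Gamma (s.re + 2) / ‖s‖ ^ 2 := by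
  have hs0 : s ≠ 0 := by rintro rfl; simp at hs
  have hs1 : s + 1 ≠ 0 := by
    intro h
    have := congrArg re h
    simp only [add_re, one_re, zero_re] at this
    linarith
  have hnorm : ‖s‖ ≤ ‖s + 1‖ := by
    rw [← sq_le_sq₀ (norm_nonneg _) (norm_nonneg _), Complex.sq_norm, Complex.sq_norm,
      normSq_apply, normSq_apply, add_re, add_im, one_re, one_im]
    nlinarith
  have hshift : Gamma (s + 2) = (s + 1) * (s * Gamma s) := by
    rw [← Gamma_add_one s hs0, ← Gamma_add_one _ hs1, add_assoc, one_add_one_eq_two]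
  rw [le_div_iff₀ (by positivity)]
  calc ‖Gamma s‖ * ‖s‖ ^ 2 = ‖s‖ * (‖s‖ * ‖Gamma s‖) := by ring
    _ ≤ ‖s + 1‖ * (‖s‖ * ‖Gamma s‖) := by gcongr
    _ = ‖Gamma (s + 2)‖ := by rw [hshift, norm_mul, norm_mul]
    _ ≤ Real.Gamma (s.re + 2) := by
      simpa using norm_Gamma_le_Gamma_re (s := s + 2) (by rw [add_re, re_ofNat]; positivity)

lemma verticalIntegrable_Gamma {σ : ℝ} (hσ : 0 < σ) : VerticalIntegrable Gamma σ := by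
  have hdom : Integrable fun y : ℝ => Real.Gamma (σ + 2) / (σ ^ 2 + y ^ 2) := by
    refine ((integrable_inv_one_add_sq.comp_div hσ.ne').const_mul
      (Real.Gamma (σ + 2) / σ ^ 2)).congr (.of_forall fun y => ?_)
    dsimp only
    field_simp
  refine hdom.mono' (continuous_Gamma_comp (by fun_prop) (by simpa)).aestronglyMeasurable
    (.of_forall fun y => ?_)
  simpa [Complex.sq_norm, normSq_add_mul_I] using
    norm_Gamma_le_div_sq_norm (s := σ + y * I) (by simpa)

lemma verticalIntegrable_Gamma_mul_Gamma_sub {a : ℂ} {σ : ℝ} (hσ : 0 < σ) (ha : σ < a.re) :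
    VerticalIntegrable (fun s => Gamma s * Gamma (a - s)) σ := by
  refine (verticalIntegrable_Gamma hσ).mul_bdd (c := Real.Gamma (a.re - σ))
    (continuous_Gamma_comp (by fun_prop) (by simpa)).aestronglyMeasurable (.of_forall fun y => ?_)
  simpa using norm_Gamma_le_Gamma_re (s := a - (σ + y * I)) (by simpa)

/-! ### The Mellin transform of `(1 + y) ^ (-a)` -/

lemma image_div_one_sub_Ioo : (fun t : ℝ => t / (1 - t)) '' Ioo 0 1 = Ioi 0 := by
  ext y
  refine ⟨?_, fun hy => ?_⟩
  · rintro ⟨t, ⟨h0, h1⟩, rfl⟩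
    exact div_pos h0 (sub_pos.2 h1)
  · have hy : 0 < y := hy
    refine ⟨y / (1 + y), ⟨by positivity, (div_lt_one (by positivity)).2 (by linarith)⟩, ?_⟩
    dsimp only
    field_simp
    ring

lemma injOn_div_one_sub : InjOn (fun t : ℝ => t / (1 - t)) {1}ᶜ := by
  intro s hs t ht h
  have h := (div_eq_div_iff (sub_ne_zero.2 (Ne.symm hs)) (sub_ne_zero.2 (Ne.symm ht))).1 h
  linarith

lemma hasDerivAt_div_one_sub {t : ℝ} (ht : t ≠ 1) :
    HasDerivAt (fun t : ℝ => t / (1 - t)) (1 / (1 - t) ^ 2) t :=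
  ((hasDerivAt_id t).div ((hasDerivAt_id t).const_sub 1) (sub_ne_zero.2 ht.symm)).congr_deriv
    (by simp)

-- The Mellin integrand of `(1 + y) ^ (-a)` under the substitution `y = t / (1 - t)`.
lemma abs_smul_cpow_div_one_sub {t : ℝ} (ht : t ∈ Ioo (0 : ℝ) 1) (a s : ℂ) :
    |1 / (1 - t) ^ 2| • (((t / (1 - t) : ℝ) : ℂ) ^ (s - 1) • (1 + (t / (1 - t) : ℝ) : ℂ) ^ (-a)) =
      (t : ℂ) ^ (s - 1) * (1 - t : ℂ) ^ (a - s - 1) := by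
  obtain ⟨h0, h1⟩ := ht
  have hpos : 0 < 1 - t := sub_pos.2 h1
  have hne : (1 - t : ℂ) ≠ 0 := by exact_mod_cast hpos.ne'
  have hcast : (1 - t : ℂ) = ((1 - t : ℝ) : ℂ) := by push_cast; rfl
  have hbase : (1 + (t / (1 - t) : ℝ) : ℂ) = (1 - t : ℂ)⁻¹ := by
    push_cast
    field_simp
    ring
  have harg : (1 - t : ℂ).arg ≠ Real.pi := by
    rw [hcast, arg_ofReal_of_nonneg hpos.le]
    exact Real.pi_ne_zero.symm
  rw [hbase, inv_cpow _ _ harg, cpow_neg, inv_inv, ofReal_div, div_cpow_ofReal_nonneg h0.le hpos.le,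
    ← hcast, show a - s - 1 = a - (s - 1) - 2 by ring, cpow_sub (a - (s - 1)) 2 hne,
    cpow_sub a (s - 1) hne, abs_of_nonneg (by positivity), real_smul, smul_eq_mul, cpow_ofNat]
  push_cast
  field_simp

lemma hasMellin_one_add_cpow_neg {a s : ℂ} (hs : 0 < s.re) (ha : s.re < a.re) :
    HasMellin (fun y : ℝ => (1 + y : ℂ) ^ (-a)) s (betaIntegral s (a - s)) := by
  have hne : Ioo (0 : ℝ) 1 ⊆ {1}ᶜ := fun t ht => ht.2.ne
  have hderiv : ∀ t ∈ Ioo (0 : ℝ) 1,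
      HasDerivWithinAt (fun t : ℝ => t / (1 - t)) (1 / (1 - t) ^ 2) (Ioo 0 1) t :=
    fun t ht => (hasDerivAt_div_one_sub (hne ht)).hasDerivWithinAt
  have hinj := injOn_div_one_sub.mono hne
  have hint : IntegrableOn (fun t : ℝ => (t : ℂ) ^ (s - 1) * (1 - t : ℂ) ^ (a - s - 1))
      (Ioo 0 1) :=
    (intervalIntegrable_iff_integrableOn_Ioo_of_le zero_le_one).1
      (betaIntegral_convergent hs (by simpa))
  constructor
  · rw [MellinConvergent, ← image_div_one_sub_Ioo,
      integrableOn_image_iff_integrableOn_abs_deriv_smul measurableSet_Ioo hderiv hinj]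
    exact hint.congr_fun (fun t ht => (abs_smul_cpow_div_one_sub ht a s).symm) measurableSet_Ioo
  · rw [mellin, ← image_div_one_sub_Ioo,
      integral_image_eq_integral_abs_deriv_smul measurableSet_Ioo hderiv hinj, betaIntegral,
      intervalIntegral.integral_of_le zero_le_one, integral_Ioc_eq_integral_Ioo]
    exact setIntegral_congr_fun measurableSet_Ioo fun t ht => abs_smul_cpow_div_one_sub ht a s

lemma mellinInv_Gamma_mul_Gamma_sub {a : ℂ} {σ : ℝ} (hσ : 0 < σ) (ha : σ < a.re) {x : ℝ}
    (hx : 0 < x) :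
    mellinInv σ (fun s => Gamma s * Gamma (a - s)) x = Gamma a * (1 + x : ℂ) ^ (-a) := by
  have hmellin (y : ℝ) :
      HasMellin (fun y : ℝ => Gamma a • (1 + y : ℂ) ^ (-a)) (σ + y * I)
        (Gamma (σ + y * I) * Gamma (a - (σ + y * I))) := by
    have hs : 0 < (σ + y * I : ℂ).re := by simpa
    have ht : 0 < (a - (σ + y * I)).re := by simpa
    have hbeta := hasMellin_one_add_cpow_neg hs (sub_pos.1 ((sub_re _ _).symm ▸ ht))
    rw [Gamma_mul_Gamma_eq_betaIntegral hs ht, add_sub_cancel]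
    exact ⟨hbeta.1.const_smul _, by rw [mellin_const_smul, hbeta.2, smul_eq_mul]⟩
  have hcont : ContinuousAt (fun y : ℝ => (1 + y : ℂ) ^ (-a)) x :=
    .cpow (by fun_prop) continuousAt_const (.inl (by rw [add_re, one_re, ofReal_re]; positivity))
  have hinv := mellinInv_mellin_eq σ (fun y : ℝ => Gamma a • (1 + y : ℂ) ^ (-a)) hx
    (by simpa using (hmellin 0).1)
    ((verticalIntegrable_Gamma_mul_Gamma_sub hσ ha).congr
      (.of_forall fun y => (hmellin y).2.symm))
    (hcont.const_mul _)
  rw [smul_eq_mul] at hinv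
  rw [← hinv]
  simp only [mellinInv, (hmellin _).2]

/-! ### The Mellin–Parseval formula -/

lemma norm_ofReal_cpow_neg_mul_I {x : ℝ} (hx : 0 < x) (y : ℝ) : ‖(x : ℂ) ^ (-(y * I))‖ = 1 := by
  simp [norm_cpow_eq_rpow_re_of_pos hx]

lemma ofReal_cpow_neg_add_mul_I {x : ℝ} (hx : 0 < x) (σ y : ℝ) :
    (x : ℂ) ^ (-(σ + y * I : ℂ)) = (x : ℂ) ^ (-(y * I)) * (x : ℂ) ^ (-σ : ℂ) := by
  rw [neg_add_rev, cpow_add _ _ (ofReal_ne_zero.2 hx.ne')]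

lemma verticalIntegrable_cpow_neg_mul {f : ℂ → ℂ} {σ x : ℝ} (hf : VerticalIntegrable f σ)
    (hx : 0 < x) : VerticalIntegrable (fun s => (x : ℂ) ^ (-s) * f s) σ := by
  refine hf.bdd_mul (c := x ^ (-σ)) ?_ (.of_forall fun y => ?_)
  · exact Measurable.aestronglyMeasurable (by fun_prop)
  · simp [norm_cpow_eq_rpow_re_of_pos hx]

lemma integrable_mul_cpow_neg_mul {φ : ℂ → ℂ} {k : ℝ → ℂ} {σ : ℝ} (hφ : VerticalIntegrable φ σ)
    (hk : MellinConvergent k (1 - σ)) {x : ℝ} (hx : 0 < x) :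
    Integrable (fun p : ℝ × ℝ =>
      k p.1 * (((x * p.1 : ℝ) : ℂ) ^ (-(σ + p.2 * I : ℂ)) * φ (σ + p.2 * I)))
      ((volume.restrict (Ioi 0)).prod volume) := by
  have hpos : ∀ᵐ p : ℝ × ℝ ∂(volume.restrict (Ioi 0)).prod volume, 0 < p.1 :=
    Measure.quasiMeasurePreserving_fst.ae (ae_restrict_mem measurableSet_Ioi)
  have hprod : Integrable (fun p : ℝ × ℝ =>
      ((p.1 : ℂ) ^ ((1 - σ : ℂ) - 1) • k p.1) * ((x : ℂ) ^ (-σ : ℂ) * φ (σ + p.2 * I)))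
      ((volume.restrict (Ioi 0)).prod volume) :=
    Integrable.mul_prod hk (hφ.const_mul _)
  -- The integrand is this product times the unimodular factor `(x t) ^ (-i y)`.
  refine (hprod.bdd_mul (f := fun p : ℝ × ℝ => ((x * p.1 : ℝ) : ℂ) ^ (-(p.2 * I))) (c := 1)
    (Measurable.aestronglyMeasurable (by fun_prop)) ?_).congr ?_
  · filter_upwards [hpos] with p hp
    exact (norm_ofReal_cpow_neg_mul_I (mul_pos hx hp) _).le
  · filter_upwards [hpos] with p hp
    rw [ofReal_cpow_neg_add_mul_I (mul_pos hx hp), ofReal_mul,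
      mul_cpow_ofReal_nonneg (r := -(σ : ℂ)) hx.le hp.le, smul_eq_mul, sub_sub_cancel_left]
    ring

lemma integral_mul_cpow_neg_mul (k : ℝ → ℂ) {x : ℝ} (hx : 0 < x) (s z : ℂ) :
    ∫ t in Ioi (0 : ℝ), k t * (((x * t : ℝ) : ℂ) ^ (-s) * z) =
      (x : ℂ) ^ (-s) * (z * mellin k (1 - s)) := by
  rw [mellin, ← integral_const_mul, ← integral_const_mul]
  refine setIntegral_congr_fun measurableSet_Ioi fun t (ht : 0 < t) => ?_
  rw [ofReal_mul, mul_cpow_ofReal_nonneg hx.le ht.le, sub_sub_cancel_left, smul_eq_mul]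
  ring

lemma verticalIntegrable_mul_mellin_one_sub {φ : ℂ → ℂ} {k : ℝ → ℂ} {σ : ℝ}
    (hφ : VerticalIntegrable φ σ) (hk : MellinConvergent k (1 - σ)) :
    VerticalIntegrable (fun s => φ s * mellin k (1 - s)) σ := by
  refine (integrable_mul_cpow_neg_mul hφ hk one_pos).integral_prod_right.congr
    (.of_forall fun y => ?_)
  simpa using integral_mul_cpow_neg_mul k one_pos (σ + y * I) (φ (σ + y * I))

lemma mellinInv_mul_mellin_one_sub {φ : ℂ → ℂ} {k : ℝ → ℂ} {σ : ℝ} (hφ : VerticalIntegrable φ σ)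
    (hk : MellinConvergent k (1 - σ)) {x : ℝ} (hx : 0 < x) :
    mellinInv σ (fun s => φ s * mellin k (1 - s)) x =
      ∫ t in Ioi 0, k t * mellinInv σ φ (x * t) := by
  simp only [mellinInv, smul_eq_mul, real_smul, mul_left_comm (k _)]
  simp_rw [← integral_mul_cpow_neg_mul k hx, ← integral_const_mul (k _)]
  rw [integral_const_mul, ← integral_integral_swap (integrable_mul_cpow_neg_mul hφ hk hx)]

/-! ### Barnes' integral equals Euler's integral -/

/-- The function equal to `t ^ (p - 1) * (1 - t) ^ (q - 1)` on `(0, 1]` and to `0` elsewhere,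
whose Mellin transform is a translate of the beta function. -/
noncomputable def betaKernel (p q : ℂ) : ℝ → ℂ :=
  (Ioc 0 1).indicator fun t => (t : ℂ) ^ (p - 1) * (1 - t : ℂ) ^ (q - 1)

lemma integral_betaKernel_mul (p q : ℂ) (f : ℝ → ℂ) :
    ∫ t in Ioi 0, betaKernel p q t * f t =
      ∫ t in (0 : ℝ)..1, (t : ℂ) ^ (p - 1) * (1 - t : ℂ) ^ (q - 1) * f t := by
  simp only [betaKernel, ← indicator_mul_left]
  rw [setIntegral_indicator measurableSet_Ioc, inter_eq_right.2 Ioc_subset_Ioi_self,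
    intervalIntegral.integral_of_le zero_le_one]

lemma integrable_betaKernel {p q : ℂ} (hp : 0 < p.re) (hq : 0 < q.re) :
    Integrable (betaKernel p q) :=
  (integrable_indicator_iff measurableSet_Ioc).2
    ((intervalIntegrable_iff_integrableOn_Ioc_of_le zero_le_one).1 (betaIntegral_convergent hp hq))

lemma cpow_sub_one_mul_betaKernel (p q s : ℂ) (t : ℝ) :
    (t : ℂ) ^ (s - 1) * betaKernel p q t = betaKernel (p + s - 1) q t := by
  by_cases ht : t ∈ Ioc (0 : ℝ) 1
  · rw [betaKernel, betaKernel, indicator_of_mem ht, indicator_of_mem ht, ← mul_assoc,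
      ← cpow_add _ _ (ofReal_ne_zero.2 ht.1.ne')]
    ring_nf
  · rw [betaKernel, betaKernel, indicator_of_notMem ht, indicator_of_notMem ht, mul_zero]

lemma hasMellin_betaKernel {p q s : ℂ} (hp : 0 < (p + s - 1).re) (hq : 0 < q.re) :
    HasMellin (betaKernel p q) s (betaIntegral (p + s - 1) q) := by
  simp only [HasMellin, MellinConvergent, mellin, smul_eq_mul, cpow_sub_one_mul_betaKernel]
  refine ⟨(integrable_betaKernel hp hq).integrableOn, ?_⟩
  simpa [betaIntegral] using integral_betaKernel_mul (p + s - 1) q 1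

/-- Euler's integral `∫₀¹ t^(b-1) (1-t)^(c-b-1) (1-wt)^(-a) dt`, the analytic continuation of
`Γ(b) Γ(c-b) / Γ(c) · ₂F₁(a, b; c; w)` to the complex plane cut along `[1, ∞)`. -/
noncomputable def eulerIntegral (a b c w : ℂ) : ℂ :=
  ∫ t in (0 : ℝ)..1, (t : ℂ) ^ (b - 1) * (1 - t : ℂ) ^ (c - b - 1) * (1 - w * t) ^ (-a)

/-- The Mellin–Barnes integrand whose inverse Mellin transform on a line `0 < re s < re a, re b`
is a multiple of `x ↦ ₂F₁(a, b; c; -x)`. -/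
noncomputable def barnesIntegrand (a b c s : ℂ) : ℂ :=
  Gamma s * Gamma (a - s) * Gamma (b - s) / Gamma (c - s)

lemma Gamma_mul_Gamma_mul_mellin_betaKernel {a b c s : ℂ} (hb : s.re < b.re) (hbc : b.re < c.re) :
    Gamma s * Gamma (a - s) * mellin (betaKernel b (c - b)) (1 - s) =
      Gamma (c - b) * barnesIntegrand a b c s := by
  have hbs : 0 < (b - s).re := by simpa
  have hcb : 0 < (c - b).re := by simpa
  have hbeta := hasMellin_betaKernel (p := b) (s := 1 - s) (q := c - b)
    (by simpa [add_sub_assoc]) hcb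
  rw [hbeta.2, show b + (1 - s) - 1 = b - s by ring, betaIntegral_eq_Gamma_mul_div _ _ hbs hcb,
    show b - s + (c - b) = c - s by ring, barnesIntegrand]
  ring

lemma mellinConvergent_betaKernel_one_sub {b c : ℂ} {σ : ℝ} (hb : σ < b.re) (hbc : b.re < c.re) :
    MellinConvergent (betaKernel b (c - b)) (1 - σ) :=
  (hasMellin_betaKernel (by simpa [add_sub_assoc]) (by simpa)).1

lemma verticalIntegrable_barnesIntegrand {a b c : ℂ} {σ : ℝ} (hσ : 0 < σ) (ha : σ < a.re)
    (hb : σ < b.re) (hbc : b.re < c.re) : VerticalIntegrable (barnesIntegrand a b c) σ := by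
  have hcb : Gamma (c - b) ≠ 0 := Gamma_ne_zero_of_re_pos (by simpa)
  refine ((verticalIntegrable_mul_mellin_one_sub (verticalIntegrable_Gamma_mul_Gamma_sub hσ ha)
    (mellinConvergent_betaKernel_one_sub hb hbc)).const_mul (Gamma (c - b))⁻¹).congr
    (.of_forall fun y => ?_)
  dsimp only
  rw [Gamma_mul_Gamma_mul_mellin_betaKernel (by simpa) hbc, inv_mul_cancel_left₀ hcb]

lemma mellinInv_barnesIntegrand_eq_eulerIntegral {a b c : ℂ} {σ : ℝ} (hσ : 0 < σ) (ha : σ < a.re)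
    (hb : σ < b.re) (hbc : b.re < c.re) {x : ℝ} (hx : 0 < x) :
    Gamma (c - b) * mellinInv σ (barnesIntegrand a b c) x = Gamma a * eulerIntegral a b c (-x) := by
  calc Gamma (c - b) * mellinInv σ (barnesIntegrand a b c) x
      = mellinInv σ
          (fun s => Gamma s * Gamma (a - s) * mellin (betaKernel b (c - b)) (1 - s)) x := by
        have hline (y : ℝ) := Gamma_mul_Gamma_mul_mellin_betaKernel (a := a) (b := b) (c := c)
          (s := σ + y * I) (by simpa) hbc
        simp only [mellinInv, hline, smul_eq_mul, real_smul, mul_left_comm _ (Gamma (c - b))]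
        rw [integral_const_mul, mul_left_comm]
    _ = ∫ t in Ioi 0, betaKernel b (c - b) t *
          mellinInv σ (fun s => Gamma s * Gamma (a - s)) (x * t) :=
        mellinInv_mul_mellin_one_sub (verticalIntegrable_Gamma_mul_Gamma_sub hσ ha)
          (mellinConvergent_betaKernel_one_sub hb hbc) hx
    _ = ∫ t in Ioi 0, betaKernel b (c - b) t * (Gamma a * (1 + (x * t : ℝ) : ℂ) ^ (-a)) :=
        setIntegral_congr_fun measurableSet_Ioi fun t (ht : 0 < t) => by
          rw [mellinInv_Gamma_mul_Gamma_sub hσ ha (mul_pos hx ht)]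
    _ = Gamma a * eulerIntegral a b c (-x) := by
        rw [integral_betaKernel_mul, eulerIntegral, ← intervalIntegral.integral_const_mul]
        congr! 2
        push_cast
        ring_nf

/-! ### Analytic continuation of the hypergeometric series -/

lemma one_sub_mul_mem_slitPlane {w : ℂ} (hw : 1 - w ∈ slitPlane) {t : ℝ}
    (ht : t ∈ Icc (0 : ℝ) 1) : 1 - w * t ∈ slitPlane := by
  have hmem := starConvex_one_slitPlane hw (sub_nonneg.2 ht.2) ht.1 (sub_add_cancel 1 t)
  convert hmem using 1
  simp only [real_smul]
  push_cast
  ring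

lemma isOpen_setOf_one_sub_mem_slitPlane : IsOpen {w : ℂ | 1 - w ∈ slitPlane} :=
  isOpen_slitPlane.preimage (by fun_prop)

lemma isPreconnected_setOf_one_sub_mem_slitPlane : IsPreconnected {w : ℂ | 1 - w ∈ slitPlane} := by
  have hstar : StarConvex ℝ 0 {w : ℂ | 1 - w ∈ slitPlane} :=
    starConvex_zero_iff.2 fun _ hw _ h0 h1 => by
      simpa [mul_comm] using one_sub_mul_mem_slitPlane hw ⟨h0, h1⟩
  exact (hstar.isPathConnected (by simp)).isConnected.isPreconnected

lemma differentiableOn_integral_mul {X : Type*} [TopologicalSpace X] [T2Space X] [MeasurableSpace X]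
    [OpensMeasurableSpace X] {μ : Measure X} {K : Set X} (hK : IsCompact K)
    {U : Set ℂ} (hU : IsOpen U) {k : X → ℂ} (hk : IntegrableOn k K μ) {f f' : ℂ → X → ℂ}
    (hf : ∀ w ∈ U, ContinuousOn (f w) K) (hf' : ContinuousOn f'.uncurry (U ×ˢ K))
    (hderiv : ∀ w ∈ U, ∀ t ∈ K, HasDerivAt (f · t) (f' w t) w) :
    DifferentiableOn ℂ (fun w => ∫ t in K, k t * f w t ∂μ) U := by
  intro w₀ hw₀
  obtain ⟨ε, hε, hball⟩ := Metric.nhds_basis_closedBall.mem_iff.1 (hU.mem_nhds hw₀)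
  obtain ⟨C, hC⟩ := ((isCompact_closedBall w₀ ε).prod hK).exists_bound_of_continuousOn
    (hf'.mono (prod_mono hball subset_rfl))
  obtain ⟨C₀, hC₀⟩ := hK.exists_bound_of_continuousOn (hf w₀ hw₀)
  have hmem : ∀ᵐ t ∂μ.restrict K, t ∈ K := ae_restrict_mem hK.measurableSet
  have hmeas {g : X → ℂ} (hg : ContinuousOn g K) : AEStronglyMeasurable g (μ.restrict K) :=
    hg.aestronglyMeasurable_of_isCompact hK hK.measurableSet
  have hf'₀ : ContinuousOn (f' w₀) K :=
    hf'.comp (f := fun t => (w₀, t)) (by fun_prop) fun t ht => ⟨hw₀, ht⟩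
  refine (hasDerivAt_integral_of_dominated_loc_of_deriv_le (F := fun w t => k t * f w t)
    (F' := fun w t => k t * f' w t) (bound := fun t => ‖k t‖ * C)
    (Metric.closedBall_mem_nhds w₀ hε) ?_ ?_ (hk.aestronglyMeasurable.mul (hmeas hf'₀)) ?_
    (hk.norm.mul_const C) ?_).2.differentiableAt.differentiableWithinAt
  · filter_upwards [hU.mem_nhds hw₀] with w hw
    exact hk.aestronglyMeasurable.mul (hmeas (hf w hw))
  · exact hk.mul_bdd (hmeas (hf w₀ hw₀)) (hmem.mono hC₀)
  · filter_upwards [hmem] with t ht w hw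
    rw [norm_mul]
    gcongr
    exact hC (w, t) ⟨hw, ht⟩
  · filter_upwards [hmem] with t ht w hw
    exact (hderiv w (hball hw) t ht).const_mul (k t)

lemma continuousOn_one_sub_mul_cpow (s : ℂ) :
    ContinuousOn (fun p : ℂ × ℝ => (1 - p.1 * p.2) ^ s) ({w | 1 - w ∈ slitPlane} ×ˢ Icc 0 1) :=
  ContinuousOn.cpow (by fun_prop) continuousOn_const fun _ hp => one_sub_mul_mem_slitPlane hp.1 hp.2

lemma hasDerivAt_one_sub_mul_cpow_neg {w z : ℂ} (hw : 1 - w * z ∈ slitPlane) (a : ℂ) :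
    HasDerivAt (fun w : ℂ => (1 - w * z) ^ (-a)) (a * z * (1 - w * z) ^ (-a - 1)) w := by
  have hbase : HasDerivAt (fun w : ℂ => 1 - w * z) (-z) w := by
    simpa using ((hasDerivAt_id w).mul_const z).const_sub 1
  exact (hbase.cpow_const hw).congr_deriv (by ring)

lemma differentiableOn_eulerIntegral (a : ℂ) {b c : ℂ} (hb : 0 < b.re) (hbc : b.re < c.re) :
    DifferentiableOn ℂ (eulerIntegral a b c) {w | 1 - w ∈ slitPlane} := by
  have hk := (intervalIntegrable_iff_integrableOn_Icc_of_le zero_le_one).1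
    (betaIntegral_convergent (v := c - b) hb (by simpa))
  refine (differentiableOn_integral_mul isCompact_Icc isOpen_setOf_one_sub_mem_slitPlane hk
    (f := fun w t => (1 - w * t) ^ (-a)) (f' := fun w t => a * t * (1 - w * t) ^ (-a - 1))
    (fun w hw => ?_) ?_ fun w hw t ht =>
      hasDerivAt_one_sub_mul_cpow_neg (one_sub_mul_mem_slitPlane hw ht) a).congr fun w _ => ?_
  · exact (continuousOn_one_sub_mul_cpow (-a)).comp (f := fun t : ℝ => (w, t)) (by fun_prop)
      fun t ht => ⟨hw, ht⟩
  · exact .mul (by fun_prop) (continuousOn_one_sub_mul_cpow (-a - 1))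
  · rw [eulerIntegral, intervalIntegral.integral_of_le zero_le_one, integral_Icc_eq_integral_Ioc]

lemma hasSum_ascPochhammer_mul_pow (a : ℂ) {x : ℂ} (hx : ‖x‖ < 1) :
    HasSum (fun n : ℕ => (ascPochhammer ℂ n).eval a / n.factorial * x ^ n) ((1 - x) ^ (-a)) := by
  have hcoeff (n : ℕ) :
      Ring.choose (a + n - 1) n = (ascPochhammer ℂ n).eval a / n.factorial := by
    rw [← Ring.multichoose_eq, eq_div_iff (by exact_mod_cast n.factorial_ne_zero),
      ← Polynomial.ascPochhammer_smeval_eq_eval,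
      ← Ring.factorial_nsmul_multichoose_eq_ascPochhammer, nsmul_eq_mul, mul_comm]
  have hsum := (one_div_one_sub_cpow_hasFPowerSeriesOnBall_zero a).hasSum (y := x)
    (by simpa [← ofReal_norm] using hx)
  simpa only [FormalMultilinearSeries.ofScalars_apply_eq, hcoeff, smul_eq_mul, zero_add, one_div,
    ← cpow_neg] using hsum

lemma integral_cpow_mul_pow {b c : ℂ} (hb : 0 < b.re) (hbc : b.re < c.re) (n : ℕ) :
    ∫ t in (0 : ℝ)..1, (t : ℂ) ^ (b - 1) * (1 - t : ℂ) ^ (c - b - 1) * (t : ℂ) ^ n =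
      Gamma (b + n) * Gamma (c - b) / Gamma (c + n) := by
  rw [show c + n = b + n + (c - b) by ring,
    ← betaIntegral_eq_Gamma_mul_div _ _ (by rw [add_re, natCast_re]; positivity) (by simpa),
    betaIntegral]
  refine intervalIntegral.integral_congr_Ioo_of_le zero_le_one fun t ht => ?_
  rw [add_sub_right_comm, cpow_add _ _ (ofReal_ne_zero.2 ht.1.ne'), cpow_natCast]
  ring

lemma hasSum_eulerIntegral (a : ℂ) {b c w : ℂ} (hb : 0 < b.re) (hbc : b.re < c.re)
    (hw : ‖w‖ < 1) :
    HasSum (fun n : ℕ => (ascPochhammer ℂ n).eval a / n.factorial * w ^ n *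
      (Gamma (b + n) * Gamma (c - b) / Gamma (c + n))) (eulerIntegral a b c w) := by
  set k : ℝ → ℂ := fun t => (t : ℂ) ^ (b - 1) * (1 - t : ℂ) ^ (c - b - 1)
  set d : ℕ → ℂ := fun n => (ascPochhammer ℂ n).eval a / n.factorial
  have hkint : IntervalIntegrable k volume 0 1 := betaIntegral_convergent hb (by simpa)
  have hsum : Summable fun n => ‖d n * w ^ n‖ := (hasSum_ascPochhammer_mul_pow a hw).summable.norm
  have hdom := intervalIntegral.hasSum_integral_of_dominated_convergence (μ := volume)
    (F := fun n t => d n * w ^ n * (k t * (t : ℂ) ^ n)) (f := fun t => k t * (1 - w * t) ^ (-a))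
    (fun n t => ‖d n * w ^ n‖ * ‖k t‖)
    (fun n => ((hkint.def'.aestronglyMeasurable.mul (by fun_prop)).const_mul _))
    (fun n => .of_forall fun t ht => ?_) (.of_forall fun t _ => hsum.mul_right _)
    (by simpa only [tsum_mul_right] using hkint.norm.const_mul _)
    (.of_forall fun t ht => ?_)
  · simpa only [intervalIntegral.integral_const_mul, k, d, integral_cpow_mul_pow hb hbc,
      eulerIntegral] using hdom
  all_goals
    rw [uIoc_of_le zero_le_one] at ht
    have hnorm : ‖(t : ℂ)‖ ≤ 1 := by simpa [abs_of_pos ht.1] using ht.2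
  · rw [norm_mul, norm_mul (k t), norm_pow]
    gcongr
    exact mul_le_of_le_one_right (norm_nonneg _) (pow_le_one₀ (norm_nonneg _) hnorm)
  · have hwt : ‖w * t‖ < 1 := by
      rw [norm_mul]
      exact (mul_le_of_le_one_right (norm_nonneg w) hnorm).trans_lt hw
    refine ((hasSum_ascPochhammer_mul_pow a hwt).mul_left (k t)).congr_fun fun n => ?_
    simp only [d]
    ring

lemma eulerIntegral_eq_ordinaryHypergeometric (a : ℂ) {b c w : ℂ} (hb : 0 < b.re)
    (hbc : b.re < c.re) (hw : ‖w‖ < 1) :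
    eulerIntegral a b c w = Gamma b * Gamma (c - b) / Gamma c * ₂F₁ a b c w := by
  have hc : 0 < c.re := hb.trans hbc
  have hΓb := Gamma_ne_zero_of_re_pos hb
  have hΓc := Gamma_ne_zero_of_re_pos hc
  rw [← (hasSum_eulerIntegral a hb hbc hw).tsum_eq, ordinaryHypergeometric_eq_tsum, ← tsum_mul_left]
  refine tsum_congr fun n => ?_
  rw [← Gamma_add_nat_div_Gamma_eq b (ne_neg_natCast_of_re_pos hb),
    ← Gamma_add_nat_div_Gamma_eq c (ne_neg_natCast_of_re_pos hc), smul_eq_mul]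
  field_simp

lemma ordinaryHypergeometric_eq_tsum_Gamma {a b c : ℂ} (ha : ∀ k : ℕ, a ≠ -k)
    (hb : ∀ k : ℕ, b ≠ -k) (hc : ∀ k : ℕ, c ≠ -k) (w : ℂ) :
    ₂F₁ a b c w = Gamma c / (Gamma a * Gamma b) *
      ∑' n : ℕ, Gamma (a + n) * Gamma (b + n) / Gamma (c + n) * w ^ n / n.factorial := by
  rw [ordinaryHypergeometric_eq_tsum, ← tsum_mul_left]
  refine tsum_congr fun n => ?_
  rw [← Gamma_add_nat_div_Gamma_eq a ha, ← Gamma_add_nat_div_Gamma_eq b hb,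
    ← Gamma_add_nat_div_Gamma_eq c hc, smul_eq_mul]
  field_simp

lemma setOf_not_im_eq_zero_and_one_le_re :
    {w : ℂ | ¬(w.im = 0 ∧ 1 ≤ w.re)} = {w : ℂ | 1 - w ∈ slitPlane} := by
  ext w
  simp [mem_slitPlane_iff, or_iff_not_imp_right]

lemma eulerIntegral_eq_of_eventuallyEq_ordinaryHypergeometric {a b c : ℂ} (hb : 0 < b.re)
    (hbc : b.re < c.re) {F : ℂ → ℂ} (hF : AnalyticOnNhd ℂ F {w | 1 - w ∈ slitPlane})
    (hF₀ : F =ᶠ[𝓝 0] ₂F₁ a b c) {w : ℂ} (hw : 1 - w ∈ slitPlane) :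
    eulerIntegral a b c w = Gamma b * Gamma (c - b) / Gamma c * F w := by
  refine ((differentiableOn_eulerIntegral a hb hbc).analyticOnNhd
    isOpen_setOf_one_sub_mem_slitPlane).eqOn_of_preconnected_of_eventuallyEq
      (analyticOnNhd_const.mul hF) isPreconnected_setOf_one_sub_mem_slitPlane (z₀ := 0) (by simp)
      ?_ hw
  filter_upwards [hF₀, Metric.ball_mem_nhds (0 : ℂ) one_pos] with w hFw hw
  rw [eulerIntegral_eq_ordinaryHypergeometric a hb hbc (mem_ball_zero_iff.1 hw), hFw]

theorem mellinInv_barnesIntegrand {a b c : ℂ} {σ : ℝ} (hσ : 0 < σ) (ha : σ < a.re)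
    (hb : σ < b.re) (hbc : b.re < c.re) {F : ℂ → ℂ}
    (hF : AnalyticOnNhd ℂ F {w | 1 - w ∈ slitPlane}) (hF₀ : F =ᶠ[𝓝 0] ₂F₁ a b c) {x : ℝ}
    (hx : 0 < x) :
    mellinInv σ (barnesIntegrand a b c) x = Gamma a * Gamma b / Gamma c * F (-x) := by
  have hΓ : Gamma (c - b) ≠ 0 := Gamma_ne_zero_of_re_pos (by simpa)
  have hmem : 1 - (-x : ℂ) ∈ slitPlane := .inl (by simpa using by positivity)
  refine mul_left_cancel₀ hΓ ?_
  rw [mellinInv_barnesIntegrand_eq_eulerIntegral hσ ha hb hbc hx,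
    eulerIntegral_eq_of_eventuallyEq_ordinaryHypergeometric (hσ.trans hb) hbc hF hF₀ hmem]
  ring

/-! ### The substitution `s ↦ λ - 1 / 2 + s / 2` -/

lemma integrable_comp_add_mul_I_div_two {g : ℂ → ℂ} {w : ℂ} (hg : VerticalIntegrable g w.re) :
    Integrable fun τ : ℝ => g (w + τ * I / 2) := by
  refine ((Integrable.comp_add_left hg w.im).comp_div two_ne_zero).congr (.of_forall fun τ => ?_)
  dsimp only
  congr 1
  conv_rhs => rw [← re_add_im w]
  push_cast
  ring

lemma integral_comp_add_mul_I_div_two (g : ℂ → ℂ) (w : ℂ) :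
    ∫ τ : ℝ, g (w + τ * I / 2) = 2 * ∫ y : ℝ, g (w.re + y * I) := by
  have hline (τ : ℝ) : w + τ * I / 2 = w.re + ((w.im + τ / 2 : ℝ) : ℂ) * I := by
    conv_lhs => rw [← re_add_im w]
    push_cast
    ring
  simp_rw [hline]
  rw [Measure.integral_comp_div (fun y : ℝ => g (w.re + ((w.im + y : ℝ) : ℂ) * I)) 2,
    integral_add_left_eq_self fun y : ℝ => g (w.re + y * I)]
  simp

lemma exp_mul_ofReal_log {x : ℝ} (hx : 0 < x) (s : ℂ) : exp (s * Real.log x) = (x : ℂ) ^ s := by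
  rw [cpow_def_of_ne_zero (ofReal_ne_zero.2 hx.ne'), ofReal_log hx.le, mul_comm]

lemma gammaFactor_eq_barnesIntegrand (u v lam s : ℂ) :
    gammaFactor u v lam s =
      barnesIntegrand (lam - u + v) (lam - u - v) (2 * lam) (lam - 1 / 2 + s / 2) := by
  rw [gammaFactor, barnesIntegrand]
  ring_nf

lemma gammaFactor_mul_exp {x : ℝ} (hx : 0 < x) (u v lam : ℂ) (Δ τ : ℝ) :
    gammaFactor u v lam (Δ + τ * I) * exp ((Δ + τ * I) / 2 * Real.log x⁻¹) =
      (x : ℂ) ^ (lam - 1 / 2) * ((x : ℂ) ^ (-(lam - 1 / 2 + Δ / 2 + τ * I / 2)) *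
        barnesIntegrand (lam - u + v) (lam - u - v) (2 * lam)
          (lam - 1 / 2 + Δ / 2 + τ * I / 2)) := by
  rw [gammaFactor_eq_barnesIntegrand, Real.log_inv, ofReal_neg, mul_neg, ← neg_mul,
    exp_mul_ofReal_log hx, ← mul_assoc, ← cpow_add _ _ (ofReal_ne_zero.2 hx.ne'), mul_comm]
  ring_nf

lemma integrable_gammaFactor_mul_exp {x : ℝ} (hx : 0 < x) {u v lam : ℂ} {Δ : ℝ}
    (hint : VerticalIntegrable (barnesIntegrand (lam - u + v) (lam - u - v) (2 * lam))
      (lam.re - 1 / 2 + Δ / 2)) :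
    Integrable fun τ : ℝ =>
      gammaFactor u v lam (Δ + τ * I) * exp ((Δ + τ * I) / 2 * Real.log x⁻¹) := by
  have hre : (lam - 1 / 2 + Δ / 2 : ℂ).re = lam.re - 1 / 2 + Δ / 2 := by simp
  simp_rw [gammaFactor_mul_exp hx]
  exact (integrable_comp_add_mul_I_div_two
    (hre ▸ verticalIntegrable_cpow_neg_mul hint hx)).const_mul _

lemma integral_gammaFactor_mul_exp {x : ℝ} (hx : 0 < x) (u v lam : ℂ) (Δ : ℝ) :
    ∫ τ : ℝ, gammaFactor u v lam (Δ + τ * I) * exp ((Δ + τ * I) / 2 * Real.log x⁻¹) =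
      4 * Real.pi * (x : ℂ) ^ (lam - 1 / 2) * mellinInv (lam.re - 1 / 2 + Δ / 2)
        (barnesIntegrand (lam - u + v) (lam - u - v) (2 * lam)) x := by
  have hre : (lam - 1 / 2 + Δ / 2 : ℂ).re = lam.re - 1 / 2 + Δ / 2 := by simp
  simp_rw [gammaFactor_mul_exp hx]
  rw [integral_const_mul, integral_comp_add_mul_I_div_two fun s => (x : ℂ) ^ (-s) *
    barnesIntegrand (lam - u + v) (lam - u - v) (2 * lam) s, hre]
  simp only [mellinInv, real_smul, smul_eq_mul]
  generalize (∫ y : ℝ, (_ : ℂ)) = J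
  push_cast
  field_simp
  ring

lemma eventuallyEq_ordinaryHypergeometric {a b c : ℂ} (ha : ∀ k : ℕ, a ≠ -k)
    (hb : ∀ k : ℕ, b ≠ -k) (hc : ∀ k : ℕ, c ≠ -k) {F : ℂ → ℂ}
    (hF : ∀ w : ℂ, ‖w‖ < 1 → F w = Gamma c / (Gamma a * Gamma b) *
      ∑' n : ℕ, Gamma (a + n) * Gamma (b + n) / Gamma (c + n) * w ^ n / n.factorial) :
    F =ᶠ[𝓝 0] ₂F₁ a b c := by
  filter_upwards [Metric.ball_mem_nhds (0 : ℂ) one_pos] with w hw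
  rw [hF w (mem_ball_zero_iff.1 hw), ordinaryHypergeometric_eq_tsum_Gamma ha hb hc]

end

theorem H_lambda_eq_hypergeometric_general (u v lam : ℂ) (huv : 0 < (lam + u + v).re) (Δ : ℝ)
    (hΔ1 : 1 - 2 * lam.re < Δ) (hΔ2 : Δ < 1 - 2 * u.re - 2 * |v.re|) (F : ℂ → ℂ)
    (hF : AnalyticOnNhd ℂ F {w : ℂ | ¬(w.im = 0 ∧ 1 ≤ w.re)})
    (hFseries : ∀ w : ℂ, ‖w‖ < 1 →
      F w = Complex.Gamma (2 * lam) /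
          (Complex.Gamma (lam - u + v) * Complex.Gamma (lam - u - v)) *
          ∑' n : ℕ, Complex.Gamma (lam - u + v + n) * Complex.Gamma (lam - u - v + n) /
            Complex.Gamma (2 * lam + n) * w ^ n / (n.factorial : ℂ))
    (z : ℝ) (hz : z < 0) :
    Integrable (fun τ : ℝ => gammaFactor u v lam (Δ + τ * Complex.I) *
        Complex.exp (((Δ : ℂ) + τ * Complex.I) / 2 * Real.log (-1 / z))) ∧
    (1 / 2 : ℂ) * Complex.exp ((1 / 2 - lam) * Real.log (-z)) *
        ((1 / (2 * Real.pi) : ℂ) * ∫ τ : ℝ, gammaFactor u v lam (Δ + τ * Complex.I) *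
          Complex.exp (((Δ : ℂ) + τ * Complex.I) / 2 * Real.log (-1 / z)))
      = Complex.Gamma (lam - u + v) * Complex.Gamma (lam - u - v) / Complex.Gamma (2 * lam) *
          F (z : ℂ) := by
  obtain ⟨x, rfl⟩ : ∃ x, z = -x := ⟨-z, (neg_neg z).symm⟩
  have hx : 0 < x := neg_lt_zero.1 hz
  obtain ⟨σ, hσ⟩ : ∃ σ : ℝ, lam.re - 1 / 2 + Δ / 2 = σ := ⟨_, rfl⟩
  have hσ0 : 0 < σ := by linarith
  have hσa : σ < (lam - u + v).re := by
    rw [Complex.add_re, Complex.sub_re]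
    linarith [neg_abs_le v.re]
  have hσb : σ < (lam - u - v).re := by
    rw [Complex.sub_re, Complex.sub_re]
    linarith [le_abs_self v.re]
  have hbc : (lam - u - v).re < (2 * lam).re := by
    rw [← sub_pos, ← Complex.sub_re]
    ring_nf at huv ⊢
    exact huv
  have hF₀ := eventuallyEq_ordinaryHypergeometric (ne_neg_natCast_of_re_pos (hσ0.trans hσa))
    (ne_neg_natCast_of_re_pos (hσ0.trans hσb))
    (ne_neg_natCast_of_re_pos ((hσ0.trans hσb).trans hbc)) hFseries
  have hx_cpow : (x : ℂ) ^ (lam - 1 / 2) ≠ 0 :=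
    Complex.cpow_ne_zero_iff.2 (.inl (Complex.ofReal_ne_zero.2 hx.ne'))
  rw [setOf_not_im_eq_zero_and_one_le_re] at hF
  rw [neg_div_neg_eq, one_div x, neg_neg, exp_mul_ofReal_log hx, integral_gammaFactor_mul_exp hx,
    hσ, mellinInv_barnesIntegrand hσ0 hσa hσb hbc hF hF₀ hx, ← neg_sub lam, Complex.cpow_neg,
    Complex.ofReal_neg]
  refine ⟨integrable_gammaFactor_mul_exp hx
    (hσ ▸ verticalIntegrable_barnesIntegrand hσ0 hσa hσb hbc), ?_⟩
  generalize (x : ℂ) ^ (lam - 1 / 2) = X at hx_cpow ⊢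
  field_simp
  norm_num

/-- Let `Re v = 0`, `Re u ≥ 0`, `Re λ > 1 + Re u`, and `1 - 2Re λ < Δ < -1 - 2Re u`.
If `F` is an analytic function on `ℂ ∖ [1,∞)` agreeing with the Gauss hypergeometric series
`₂F₁(λ-u+v, λ-u-v, 2λ; w)` for `|w| < 1`, then for every real `z < 0`,
`(1/2)(-z)^{1/2-λ} · (1/2π) ∫_ℝ Γ(u,v,λ;Δ+iτ) (-1/z)^{(Δ+iτ)/2} dτ
  = Γ(λ-u+v)Γ(λ-u-v)/Γ(2λ) · F(z)`, the integral being absolutely convergent. -/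
theorem H_lambda_eq_hypergeometric (u v lam : ℂ) (hv : v.re = 0) (hu : 0 ≤ u.re)
    (hlam : 1 + u.re < lam.re) (Δ : ℝ) (hΔ1 : 1 - 2 * lam.re < Δ) (hΔ2 : Δ < -1 - 2 * u.re)
    (F : ℂ → ℂ)
    (hF : AnalyticOnNhd ℂ F {w : ℂ | ¬(w.im = 0 ∧ 1 ≤ w.re)})
    (hFseries : ∀ w : ℂ, ‖w‖ < 1 →
      F w = Complex.Gamma (2 * lam) /
          (Complex.Gamma (lam - u + v) * Complex.Gamma (lam - u - v)) *
          ∑' n : ℕ, Complex.Gamma (lam - u + v + n) * Complex.Gamma (lam - u - v + n) /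
            Complex.Gamma (2 * lam + n) * w ^ n / (n.factorial : ℂ))
    (z : ℝ) (hz : z < 0) :
    Integrable (fun τ : ℝ => gammaFactor u v lam (Δ + τ * Complex.I) *
        Complex.exp (((Δ : ℂ) + τ * Complex.I) / 2 * Real.log (-1 / z))) ∧
    (1 / 2 : ℂ) * Complex.exp ((1 / 2 - lam) * Real.log (-z)) *
        ((1 / (2 * Real.pi) : ℂ) * ∫ τ : ℝ, gammaFactor u v lam (Δ + τ * Complex.I) *
          Complex.exp (((Δ : ℂ) + τ * Complex.I) / 2 * Real.log (-1 / z)))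
      = Complex.Gamma (lam - u + v) * Complex.Gamma (lam - u - v) / Complex.Gamma (2 * lam) *
          F (z : ℂ) :=
  H_lambda_eq_hypergeometric_general u v lam
    (by rw [Complex.add_re, Complex.add_re]; linarith) Δ hΔ1 (by rw [hv, abs_zero]; linarith)
    F hF hFseries z hz
end
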